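/- Let K have characteristic 0, I = I_{a,b,c,α,β,γ} = (x₁^a, x₂^b, x₃^c, x₁^α x₂^β x₃^γ) ⊂ K[x₁,x₂,x₃] a monomial almost complete intersection (α < a, β < b, γ < c, at least two of α,β,γ nonzero), and suppose A = S/I fails the weak Lefschetz property. Then 3 divides a+b+c+α+β+γ; setting s = (a+b+c+α+β+γ)/3 − 2, one has dim_K A_s = dim_K A_{s+1} = max_k dim_K A_k, and the multiplication ×y : A_s → A_{s+1} is not injective for any linear form y. -/

import Mathlib

open MvPolynomial

/-- The minimal number of generators of an ideal. -/
noncomputable def mu {R : Type*} [CommRing R] (I : Ideal R) : ℕ :=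
  sInf {k | ∃ s : Finset R, s.card = k ∧ Ideal.span (s : Set R) = I}

/-- The graded maximal ideal `(x₁, …, xₙ)` of `K[x₁, …, xₙ]`. -/
noncomputable def mm (K : Type*) [Field K] (n : ℕ) : Ideal (MvPolynomial (Fin n) K) :=
  Ideal.span (Set.range X)

/-- `I` is `m`-full: `mI : y = I` for some `y ∈ m`. -/
def IsMFull {R : Type*} [CommRing R] (m I : Ideal R) : Prop :=
  ∃ y ∈ m, (m * I).colon (Ideal.span {y}) = I

/-- A homogeneous ideal: one containing all homogeneous components of its elements. -/
def IsHomog {K : Type*} [Field K] {n : ℕ} (I : Ideal (MvPolynomial (Fin n) K)) : Prop :=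
  ∀ f ∈ I, ∀ k : ℕ, homogeneousComponent k f ∈ I

/-- `dim_K (S/I)_k`, the dimension of the degree `k` part of `S/I`. -/
noncomputable def hdim (K : Type*) [Field K] (n : ℕ)
    (I : Ideal (MvPolynomial (Fin n) K)) (k : ℕ) : ℕ :=
  Module.finrank K (Submodule.map (Ideal.Quotient.mkₐ K I).toLinearMap
    (homogeneousSubmodule (Fin n) K k))

/-- The weak Lefschetz property of `S/I`: there is a linear form `y` such that
multiplication `×y : (S/I)_k → (S/I)_{k+1}` is injective or surjective for
every `k`. -/
def WLP {K : Type*} [Field K] {n : ℕ} (I : Ideal (MvPolynomial (Fin n) K)) : Prop :=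
  ∃ y : MvPolynomial (Fin n) K, y.IsHomogeneous 1 ∧ ∀ k : ℕ,
    (∀ f : MvPolynomial (Fin n) K, f.IsHomogeneous k → y * f ∈ I → f ∈ I) ∨
    (∀ g : MvPolynomial (Fin n) K, g.IsHomogeneous (k + 1) →
      ∃ f : MvPolynomial (Fin n) K, f.IsHomogeneous k ∧ g - y * f ∈ I)

/-!
Rescaling the variables preserves a monomial ideal, so multiplication by any linear form with
nonzero coefficients can be replaced by multiplication by `X₀ + X₁ - X₂`. Restrict to the line where
this form vanishes. The cokernel in degree `k + 1` becomes the space of polynomials of degree at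
most `k + 1` missed by the restricted ideal, and an element of the kernel becomes a syzygy of degree
`k + 1` between the four polynomials `X ^ e₀ * (X + 1) ^ e₂`, no two of whose summands cancel.

The operator `X (X + 1) d/dX` maps syzygies of one degree to syzygies of the next. If all `3 × 3`
minors formed from two given syzygies and a third one vanish, then comparing Wronskians shows that
the two are proportional, or that the cokernel is zero, or that no syzygy comes from the kernel.
When both the kernel and the cokernel are nonzero this leads to syzygies of degrees `k + 1`, `k + 2`
and `k + 3` with a nonzero minor, whose degree bounds the sum of the exponents by `3 (k + 2)`; a
dimension count gives the opposite bound. So failure occurs in a single degree, where the kernel and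
the cokernel are one-dimensional. Multiplication is injective below that degree and surjective above
it. In that degree no form with nonzero coefficients is injective, and a form with a zero
coefficient cannot be either, since bijectivity is an open condition.
-/

open scoped Polynomial
open Polynomial (degreeLT mem_degreeLT derivative natDegree_mul)

section Line

variable {K : Type*} [Field K] {k k' : ℕ} {e e' : Fin 3 → ℕ} {h h' : K[X]}

/-- The dehomogenised restriction `X₀ ^ e₀ * (X₀ + 1) ^ e₂` of the monomial with exponents `e` to
the line `X₂ = X₀ + X₁`, in the chart `X₁ = 1`. -/
noncomputable def lineMonomial (K : Type*) [Field K] (e : Fin 3 → ℕ) : K[X] :=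
  Polynomial.X ^ e 0 * (Polynomial.X + 1) ^ e 2

/-- The restrictions to the line `X₂ = X₀ + X₁` of the forms of degree `k` divisible by the monomial
with exponents `e`. In the chart `X₁ = 1` the divisibility by `X₁ ^ e₁` becomes a bound on the
degree; the truncated subtraction makes the space zero when `k < e₁`. -/
noncomputable def lineMultiples (K : Type*) [Field K] (k : ℕ) (e : Fin 3 → ℕ) :
    Submodule K K[X] :=
  (Ideal.span {lineMonomial K e}).restrictScalars K ⊓ degreeLT K (k + 1 - e 1)

theorem X_add_one_ne_zero : (Polynomial.X + 1 : K[X]) ≠ 0 :=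
  Polynomial.X_add_C_ne_zero 1

theorem natDegree_X_add_one : (Polynomial.X + 1 : K[X]).natDegree = 1 :=
  Polynomial.natDegree_X_add_C 1

theorem lineMonomial_ne_zero : lineMonomial K e ≠ 0 :=
  mul_ne_zero (pow_ne_zero _ Polynomial.X_ne_zero) (pow_ne_zero _ X_add_one_ne_zero)

theorem natDegree_lineMonomial : (lineMonomial K e).natDegree = e 0 + e 2 := by
  rw [lineMonomial, natDegree_mul (pow_ne_zero _ Polynomial.X_ne_zero)
    (pow_ne_zero _ X_add_one_ne_zero), Polynomial.natDegree_pow, Polynomial.natDegree_pow,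
    Polynomial.natDegree_X, natDegree_X_add_one, mul_one, mul_one]

theorem lineMonomial_add :
    lineMonomial K (e + e') = lineMonomial K e * lineMonomial K e' := by
  simp only [lineMonomial, Pi.add_apply, pow_add]
  ring

theorem lineMonomial_dvd_iff :
    lineMonomial K e ∣ h ↔ Polynomial.X ^ e 0 ∣ h ∧ (Polynomial.X + 1) ^ e 2 ∣ h :=
  ⟨fun H ↦ ⟨(dvd_mul_right _ _).trans H, (dvd_mul_left _ _).trans H⟩,
    fun H ↦ (IsCoprime.pow ⟨-1, 1, by ring⟩).mul_dvd H.1 H.2⟩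

theorem mem_lineMultiples :
    h ∈ lineMultiples K k e ↔ lineMonomial K e ∣ h ∧ h ∈ degreeLT K (k + 1 - e 1) := by
  rw [lineMultiples, Submodule.mem_inf, Submodule.restrictScalars_mem, Ideal.mem_span_singleton]

theorem mem_lineMultiples_iff (h0 : h ≠ 0) :
    h ∈ lineMultiples K k e ↔ lineMonomial K e ∣ h ∧ h.natDegree + e 1 ≤ k := by
  rw [mem_lineMultiples, mem_degreeLT, Polynomial.degree_eq_natDegree h0, Nat.cast_lt]
  exact and_congr_right' (by omega)

theorem lineMultiples_mono (hk : k ≤ k') (he : e' ≤ e) :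
    lineMultiples K k e ≤ lineMultiples K k' e' := by
  intro h hh
  rcases eq_or_ne h 0 with rfl | h0
  · exact zero_mem _
  rw [mem_lineMultiples_iff h0] at hh ⊢
  have hdvd : lineMonomial K e' ∣ lineMonomial K e :=
    mul_dvd_mul (pow_dvd_pow _ (he 0)) (pow_dvd_pow _ (he 2))
  have := he 1
  exact ⟨hdvd.trans hh.1, by lia⟩

theorem mul_mem_lineMultiples (hh : h ∈ lineMultiples K k e) (hh' : h' ∈ lineMultiples K k' e') :
    h * h' ∈ lineMultiples K (k + k') (e + e') := by
  rcases eq_or_ne h 0 with rfl | h0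
  · rw [zero_mul]; exact zero_mem _
  rcases eq_or_ne h' 0 with rfl | h0'
  · rw [mul_zero]; exact zero_mem _
  rw [mem_lineMultiples_iff h0] at hh
  rw [mem_lineMultiples_iff h0'] at hh'
  rw [mem_lineMultiples_iff (mul_ne_zero h0 h0'), lineMonomial_add, natDegree_mul h0 h0',
    Pi.add_apply]
  exact ⟨mul_dvd_mul hh.1 hh'.1, by linarith [hh.2, hh'.2]⟩

theorem one_mem_lineMultiples : (1 : K[X]) ∈ lineMultiples K 0 0 := by
  rw [mem_lineMultiples_iff one_ne_zero]
  simp [lineMonomial]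

theorem prod_mem_lineMultiples {ι : Type*} (s : Finset ι) {a : ι → ℕ} {d : ι → Fin 3 → ℕ}
    {h : ι → K[X]} (hh : ∀ i ∈ s, h i ∈ lineMultiples K (a i) (d i)) :
    ∏ i ∈ s, h i ∈ lineMultiples K (∑ i ∈ s, a i) (∑ i ∈ s, d i) := by
  classical
  induction s using Finset.induction_on with
  | empty => simpa using one_mem_lineMultiples
  | insert i s hi ih =>
    rw [Finset.prod_insert hi, Finset.sum_insert hi, Finset.sum_insert hi]
    exact mul_mem_lineMultiples (hh i (Finset.mem_insert_self i s))
      (ih fun j hj ↦ hh j (Finset.mem_insert_of_mem hj))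

theorem lineMultiples_le_degreeLT : lineMultiples K k e ≤ degreeLT K (k + 1) :=
  inf_le_right.trans (Polynomial.degreeLT_mono (Nat.sub_le _ _))

instance : FiniteDimensional K (lineMultiples K k e) :=
  Submodule.finiteDimensional_of_le lineMultiples_le_degreeLT

theorem lineMonomial_mem_lineMultiples (hk : ∑ v, e v ≤ k) :
    lineMonomial K e ∈ lineMultiples K k e := by
  rw [mem_lineMultiples_iff lineMonomial_ne_zero, natDegree_lineMonomial]
  rw [Fin.sum_univ_three] at hk
  exact ⟨dvd_rfl, by omega⟩

theorem sum_diagonal_le_of_mem_lineMultiples (h0 : h ≠ 0) {E : Fin 3 → Fin 3 → ℕ}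
    (hh : ∀ v, h ∈ lineMultiples K k (E v)) : ∑ v, E v v ≤ k := by
  simp only [mem_lineMultiples_iff h0] at hh
  have hdvd : lineMonomial K (fun v ↦ E v v) ∣ h :=
    lineMonomial_dvd_iff.2 ⟨(lineMonomial_dvd_iff.1 (hh 0).1).1,
      (lineMonomial_dvd_iff.1 (hh 2).1).2⟩
  have hdeg := Polynomial.natDegree_le_of_dvd hdvd h0
  rw [natDegree_lineMonomial] at hdeg
  rw [Fin.sum_univ_three]
  linarith [(hh 1).2]

theorem le_finrank_lineMultiples :
    k + 1 - ∑ v, e v ≤ Module.finrank K (lineMultiples K k e) := by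
  have hmap : (degreeLT K (k + 1 - ∑ v, e v)).map
      (LinearMap.mulLeft K (lineMonomial K e)) ≤ lineMultiples K k e := by
    rintro _ ⟨u, hu, rfl⟩
    rw [LinearMap.mulLeft_apply]
    rcases eq_or_ne u 0 with rfl | u0
    · rw [mul_zero]; exact zero_mem _
    rw [SetLike.mem_coe, mem_degreeLT, Polynomial.degree_eq_natDegree u0, Nat.cast_lt,
      Fin.sum_univ_three] at hu
    rw [mem_lineMultiples_iff (mul_ne_zero lineMonomial_ne_zero u0),
      natDegree_mul lineMonomial_ne_zero u0, natDegree_lineMonomial]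
    exact ⟨dvd_mul_right _ _, by omega⟩
  have hinj : Function.Injective (LinearMap.mulLeft K (lineMonomial K e)) :=
    mul_right_injective₀ lineMonomial_ne_zero
  calc k + 1 - ∑ v, e v
      = Module.finrank K (degreeLT K (k + 1 - ∑ v, e v)) := by
        rw [(Polynomial.degreeLTEquiv K _).finrank_eq, Module.finrank_fin_fun]
    _ = _ := (Submodule.equivMapOfInjective _ hinj _).finrank_eq
    _ ≤ _ := Submodule.finrank_mono hmap

theorem pow_dvd_mul_derivative {R : Type*} [CommSemiring R] {p h : R[X]} {m : ℕ} (hp : p ^ m ∣ h) :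
    p ^ m ∣ p * derivative h := by
  cases m with
  | zero => simp
  | succ m =>
    rw [pow_succ']
    exact mul_dvd_mul_left p (by simpa using Polynomial.pow_sub_one_dvd_derivative_of_pow_dvd hp)

/-- The operator `h ↦ X (X + 1) h'`, which raises the degree by one and, unlike the derivative,
preserves divisibility by powers of `X` and of `X + 1`. -/
noncomputable def eulerDerivative : K[X] →ₗ[K] K[X] :=
  LinearMap.mulLeft K (Polynomial.X * (Polynomial.X + 1)) ∘ₗ derivative

theorem eulerDerivative_apply :
    eulerDerivative h = Polynomial.X * (Polynomial.X + 1) * derivative h := rfl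

theorem eulerDerivative_mem_lineMultiples (hh : h ∈ lineMultiples K k e) :
    eulerDerivative h ∈ lineMultiples K (k + 1) e := by
  rw [eulerDerivative_apply]
  by_cases h0 : derivative h = 0
  · rw [h0, mul_zero]; exact zero_mem _
  have hX : (Polynomial.X * (Polynomial.X + 1) : K[X]) ≠ 0 :=
    mul_ne_zero Polynomial.X_ne_zero X_add_one_ne_zero
  rw [mem_lineMultiples_iff (by rintro rfl; simp at h0)] at hh
  obtain ⟨hdvd, hdeg⟩ := hh
  rw [lineMonomial_dvd_iff] at hdvd
  rw [mem_lineMultiples_iff (mul_ne_zero hX h0), lineMonomial_dvd_iff, natDegree_mul hX h0,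
    natDegree_mul Polynomial.X_ne_zero X_add_one_ne_zero, Polynomial.natDegree_X,
    natDegree_X_add_one]
  refine ⟨⟨?_, ?_⟩, ?_⟩
  · exact (pow_dvd_mul_derivative hdvd.1).trans ⟨Polynomial.X + 1, by ring⟩
  · exact (pow_dvd_mul_derivative hdvd.2).trans ⟨Polynomial.X, by ring⟩
  · have := Polynomial.natDegree_derivative_lt fun h1 ↦
      h0 (Polynomial.derivative_of_natDegree_zero h1)
    omega

theorem isCoprime_X_sub_C_pow {u v : K} (huv : u ≠ v) (m : ℕ) :
    IsCoprime ((Polynomial.X - Polynomial.C u) ^ m) (Polynomial.X - Polynomial.C v) :=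
  (Polynomial.isCoprime_X_sub_C_of_isUnit_sub (sub_ne_zero.2 huv).isUnit).pow_left

theorem exists_eq_X_sub_C_mul_of_eval_eq_zero {u : K} (hu : u ≠ 0) (hu' : u ≠ -1)
    (hh : h ∈ lineMultiples K (k + 1) e) (hroot : h.eval u = 0) :
    ∃ g ∈ lineMultiples K k e, h = (Polynomial.X - Polynomial.C u) * g := by
  obtain ⟨g, rfl⟩ := Polynomial.dvd_iff_isRoot.2 hroot
  refine ⟨g, ?_, rfl⟩
  rcases eq_or_ne g 0 with rfl | g0
  · exact zero_mem _
  have hX := Polynomial.X_sub_C_ne_zero u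
  rw [mem_lineMultiples_iff (mul_ne_zero hX g0), lineMonomial_dvd_iff, natDegree_mul hX g0,
    Polynomial.natDegree_X_sub_C] at hh
  rw [mem_lineMultiples_iff g0, lineMonomial_dvd_iff]
  refine ⟨⟨?_, ?_⟩, by omega⟩
  · have := isCoprime_X_sub_C_pow hu.symm (e 0)
    rw [Polynomial.C_0, sub_zero] at this
    exact this.dvd_of_dvd_mul_left hh.1.1
  · have := isCoprime_X_sub_C_pow hu'.symm (e 2)
    rw [Polynomial.C_neg, Polynomial.C_1, sub_neg_eq_add] at this
    exact this.dvd_of_dvd_mul_left hh.1.2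

end Line

section Syzygies

variable {K : Type*} [Field K] {ι : Type*} [Fintype ι] {d : ι → Fin 3 → ℕ} {k k' : ℕ}
  {h : ι → K[X]} {p : K[X]}

/-- The syzygies of degree `k` between the restrictions to the line of the monomials with exponents
`d i`, recorded as the families of the summands of a vanishing sum. -/
noncomputable def syzygies (K : Type*) [Field K] (d : ι → Fin 3 → ℕ) (k : ℕ) :
    Submodule K (ι → K[X]) :=
  Submodule.pi Set.univ (fun i ↦ lineMultiples K k (d i)) ⊓ LinearMap.ker (∑ i, LinearMap.proj i)

/-- The degree `k` part of the restriction to the line of the ideal generated by the monomials with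
exponents `d i`. -/
noncomputable def lineIdeal (K : Type*) [Field K] (d : ι → Fin 3 → ℕ) (k : ℕ) : Submodule K K[X] :=
  (Submodule.pi Set.univ fun i ↦ lineMultiples K k (d i)).map (∑ i, LinearMap.proj i)

theorem mem_syzygies :
    h ∈ syzygies K d k ↔ (∀ i, h i ∈ lineMultiples K k (d i)) ∧ ∑ i, h i = 0 := by
  simp [syzygies, Submodule.mem_pi]

theorem mem_lineIdeal :
    p ∈ lineIdeal K d k ↔ ∃ h : ι → K[X], (∀ i, h i ∈ lineMultiples K k (d i)) ∧ ∑ i, h i = p := by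
  simp [lineIdeal, Submodule.mem_map, Submodule.mem_pi]

theorem syzygies_mono (hk : k ≤ k') : syzygies K d k ≤ syzygies K d k' := fun h hh ↦ by
  rw [mem_syzygies] at hh ⊢
  exact ⟨fun i ↦ lineMultiples_mono hk le_rfl (hh.1 i), hh.2⟩

theorem eulerDerivative_mem_syzygies (hh : h ∈ syzygies K d k) :
    (fun i ↦ eulerDerivative (h i)) ∈ syzygies K d (k + 1) := by
  rw [mem_syzygies] at hh ⊢
  exact ⟨fun i ↦ eulerDerivative_mem_lineMultiples (hh.1 i), by rw [← map_sum, hh.2, map_zero]⟩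

theorem single_sub_single_mem_syzygies [DecidableEq ι] {i j : ι}
    (hi : p ∈ lineMultiples K k (d i)) (hj : p ∈ lineMultiples K k (d j)) :
    Pi.single i p - Pi.single j p ∈ syzygies K d k := by
  have hsingle : ∀ i, p ∈ lineMultiples K k (d i) →
      ∀ l, (Pi.single i p : ι → K[X]) l ∈ lineMultiples K k (d l) := by
    intro i hi l
    rcases eq_or_ne l i with rfl | hl
    · rwa [Pi.single_eq_same]
    · rw [Pi.single_eq_of_ne hl]; exact zero_mem _
  rw [mem_syzygies]
  exact ⟨fun l ↦ sub_mem (hsingle i hi l) (hsingle j hj l), by simp⟩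

theorem lineIdeal_le_degreeLT : lineIdeal K d k ≤ degreeLT K (k + 1) := by
  intro p hp
  obtain ⟨h, hh, rfl⟩ := mem_lineIdeal.1 hp
  exact sum_mem fun i _ ↦ lineMultiples_le_degreeLT (hh i)

theorem finrank_lineIdeal_lt (hJ : lineIdeal K d k ≠ degreeLT K (k + 1)) :
    Module.finrank K (lineIdeal K d k) < k + 1 := by
  have h := Submodule.finrank_lt_finrank_of_lt (lt_of_le_of_ne lineIdeal_le_degreeLT hJ)
  rwa [(Polynomial.degreeLTEquiv K _).finrank_eq, Module.finrank_fin_fun] at h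

theorem lineMultiples_le_lineIdeal (i : ι) : lineMultiples K k (d i) ≤ lineIdeal K d k := by
  classical
  intro p hp
  refine mem_lineIdeal.2 ⟨Pi.single i p, fun j ↦ ?_, by simp⟩
  rcases eq_or_ne j i with rfl | hj
  · rwa [Pi.single_eq_same]
  · rw [Pi.single_eq_of_ne hj]; exact zero_mem _

theorem lineIdeal_comp_le {κ : Type*} [Fintype κ] (f : κ → ι) :
    lineIdeal K (d ∘ f) k ≤ lineIdeal K d k := by
  intro p hp
  obtain ⟨h, hh, rfl⟩ := mem_lineIdeal.1 hp
  exact sum_mem fun x _ ↦ lineMultiples_le_lineIdeal (f x) (hh x)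

theorem sum_finrank_lineMultiples :
    ∑ i, Module.finrank K (lineMultiples K k (d i))
      = Module.finrank K (lineIdeal K d k) + Module.finrank K (syzygies K d k) := by
  let emb : (∀ i, lineMultiples K k (d i)) →ₗ[K] ι → K[X] :=
    LinearMap.piMap fun i ↦ (lineMultiples K k (d i)).subtype
  let total : (ι → K[X]) →ₗ[K] K[X] := ∑ i, LinearMap.proj i
  have hemb : Function.Injective emb := fun x y hxy ↦
    funext fun i ↦ Subtype.ext (congrFun hxy i)
  have hrange : LinearMap.range emb = Submodule.pi Set.univ fun i ↦ lineMultiples K k (d i) := by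
    ext h
    simp only [Submodule.mem_pi, Set.mem_univ, true_implies]
    exact ⟨by rintro ⟨x, rfl⟩ i; exact (x i).2, fun hh ↦ ⟨fun i ↦ ⟨h i, hh i⟩, rfl⟩⟩
  have hideal : LinearMap.range (total ∘ₗ emb) = lineIdeal K d k := by
    rw [LinearMap.range_comp, hrange, lineIdeal]
  have hsyz : (LinearMap.ker (total ∘ₗ emb)).map emb = syzygies K d k := by
    rw [LinearMap.ker_comp, Submodule.map_comap_eq, hrange, syzygies]
  rw [← hideal, ← hsyz, ← (Submodule.equivMapOfInjective emb hemb _).finrank_eq,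
    LinearMap.finrank_range_add_finrank_ker, Module.finrank_pi_fintype]

theorem lineMonomial_monic {e : Fin 3 → ℕ} : (lineMonomial K e).Monic :=
  (Polynomial.monic_X_pow _).mul ((Polynomial.monic_X_add_C 1).pow _)

theorem modByMonic_mul_mem_lineMultiples {e e' : Fin 3 → ℕ}
    (hk : ∑ v, e v + ∑ v, e' v ≤ k) :
    p %ₘ lineMonomial K e' * lineMonomial K e ∈ lineMultiples K k e := by
  rcases eq_or_ne (p %ₘ lineMonomial K e' * lineMonomial K e) 0 with h0 | h0
  · rw [h0]; exact zero_mem _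
  refine (mem_lineMultiples_iff h0).2 ⟨dvd_mul_left _ _, ?_⟩
  have hmul := Polynomial.natDegree_mul_le (p := p %ₘ lineMonomial K e') (q := lineMonomial K e)
  have hmod := Polynomial.natDegree_modByMonic_le p (lineMonomial_monic (K := K) (e := e'))
  rw [natDegree_lineMonomial] at hmul hmod
  rw [Fin.sum_univ_three, Fin.sum_univ_three] at hk
  omega

theorem exists_forall_lineIdeal_eq_degreeLT (hd : ∀ v, ∃ i, d i v = 0) :
    ∃ N₀, ∀ N ≥ N₀, lineIdeal K d N = degreeLT K (N + 1) := by
  choose f hf using hd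
  set g : Fin 3 → K[X] := fun v ↦ lineMonomial K (d (f v)) with hg
  obtain ⟨u, w, huw⟩ : IsCoprime (g 0) (g 2) := by
    simp only [hg, lineMonomial, hf, pow_zero, one_mul, mul_one]
    exact IsCoprime.pow ⟨1, -1, by ring⟩
  refine ⟨∑ v, ∑ x, d (f v) x, fun N hN ↦ lineIdeal_le_degreeLT.antisymm fun p hp ↦ ?_⟩
  rw [Fin.sum_univ_three] at hN
  -- Reduce the coefficients of the Bézout identity `p = p u g₀ + p w g₂` modulo the monic `g₁`; the
  -- remaining multiple of `g₁` is only subject to the degree bound `N`.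
  have hp₀ : p * u %ₘ g 1 * g 0 ∈ lineMultiples K N (d (f 0)) :=
    modByMonic_mul_mem_lineMultiples (by omega)
  have hp₂ : p * w %ₘ g 1 * g 2 ∈ lineMultiples K N (d (f 2)) :=
    modByMonic_mul_mem_lineMultiples (by omega)
  set r := p - (p * u %ₘ g 1 * g 0 + p * w %ₘ g 1 * g 2) with hr
  have hr_eq : r = g 1 * (p * u /ₘ g 1 * g 0 + p * w /ₘ g 1 * g 2) := by
    linear_combination hr - p * huw - g 0 * Polynomial.modByMonic_add_div (p * u) (g 1)
      - g 2 * Polynomial.modByMonic_add_div (p * w) (g 1)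
  have hp₁ : r ∈ lineMultiples K N (d (f 1)) := by
    refine mem_lineMultiples.2 ⟨⟨_, hr_eq⟩, ?_⟩
    rw [hf 1]
    exact sub_mem hp (add_mem (lineMultiples_le_degreeLT hp₀) (lineMultiples_le_degreeLT hp₂))
  rw [← sub_add_cancel p (p * u %ₘ g 1 * g 0 + p * w %ₘ g 1 * g 2)]
  exact add_mem (lineMultiples_le_lineIdeal _ hp₁)
    (add_mem (lineMultiples_le_lineIdeal _ hp₀) (lineMultiples_le_lineIdeal _ hp₂))

end Syzygies

section Proportional

variable {A ι : Type*} [CommRing A]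

/-- Two families are proportional if all their `2 × 2` minors vanish; over a domain this is linear
dependence over the fraction field. -/
def Proportional (s t : ι → A) : Prop :=
  ∀ i j, s i * t j = s j * t i

theorem Proportional.of_comp_succAbove {n : ℕ} {s t : Fin (n + 1) → A} (hs : ∑ i, s i = 0)
    (ht : ∑ i, t i = 0) (m : Fin (n + 1)) (h : Proportional (s ∘ m.succAbove) (t ∘ m.succAbove)) :
    Proportional s t := by
  rw [Fin.sum_univ_succAbove _ m, add_eq_zero_iff_eq_neg] at hs ht
  have hm : ∀ j, s m * t (m.succAbove j) = s (m.succAbove j) * t m := fun j ↦ by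
    rw [hs, ht, neg_mul, mul_neg, Finset.sum_mul, Finset.mul_sum]
    exact congrArg _ (Finset.sum_congr rfl fun i _ ↦ h i j)
  intro i j
  rcases Fin.eq_self_or_eq_succAbove m i with hi | ⟨i, rfl⟩ <;>
    rcases Fin.eq_self_or_eq_succAbove m j with hj | ⟨j, rfl⟩
  · rw [hi, hj]
  · rw [hi]; exact hm j
  · rw [hj]; exact (hm i).symm
  · exact h i j

theorem proportional_iff_crossProduct_eq_zero {s t : Fin 3 → A} :
    Proportional s t ↔ crossProduct s t = 0 := by
  rw [cross_apply]
  constructor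
  · intro h
    simp [h 1 2, h 2 0, h 0 1]
  · intro h
    have h0 := sub_eq_zero.1 (congrFun h 0)
    have h1 := sub_eq_zero.1 (congrFun h 1)
    have h2 := sub_eq_zero.1 (congrFun h 2)
    intro i j
    fin_cases i <;> fin_cases j
    exacts [rfl, h2, h1.symm, h2.symm, rfl, h0, h1, h0.symm, rfl]

end Proportional

section Wronskian

variable {K : Type*} [Field K] [CharZero K]

theorem exists_eq_C_mul_of_wronskian_eq_zero {p q : K[X]} (hq : q ≠ 0)
    (h : Polynomial.wronskian p q = 0) : ∃ c : K, p = Polynomial.C c * q := by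
  classical
  set g := EuclideanDomain.gcd p q
  obtain ⟨a, ha⟩ : g ∣ p := EuclideanDomain.gcd_dvd_left p q
  obtain ⟨b, hb⟩ : g ∣ q := EuclideanDomain.gcd_dvd_right p q
  have hg0 : g ≠ 0 := left_ne_zero_of_mul (hb ▸ hq)
  have hcop : IsCoprime a b := by
    refine ⟨EuclideanDomain.gcdA p q, EuclideanDomain.gcdB p q, mul_left_cancel₀ hg0 ?_⟩
    linear_combination -EuclideanDomain.gcd_eq_gcd_ab p q - EuclideanDomain.gcdA p q * ha
      - EuclideanDomain.gcdB p q * hb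
  have hab : Polynomial.wronskian a b = 0 := by
    refine (mul_eq_zero.1 ?_).resolve_left (pow_ne_zero 2 hg0)
    rw [ha, hb] at h
    simp only [Polynomial.wronskian, Polynomial.derivative_mul] at h ⊢
    linear_combination h
  obtain ⟨ha', hb'⟩ := hcop.wronskian_eq_zero_iff.1 hab
  obtain ⟨x, rfl⟩ := Polynomial.natDegree_eq_zero.1 (Polynomial.derivative_eq_zero.1 ha')
  obtain ⟨y, rfl⟩ := Polynomial.natDegree_eq_zero.1 (Polynomial.derivative_eq_zero.1 hb')
  have hy : y ≠ 0 := fun h0 ↦ hq (by rw [hb, h0, Polynomial.C_0, mul_zero])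
  exact ⟨x / y, by rw [hb, mul_left_comm, ← Polynomial.C_mul, div_mul_cancel₀ _ hy, ha]⟩

theorem exists_eq_C_mul_of_proportional_derivative {ι : Type*} {h : ι → K[X]} (h0 : h ≠ 0)
    (hh : Proportional h fun i ↦ derivative (h i)) :
    ∃ (v : ι → K) (H : K[X]), H ≠ 0 ∧ ∀ i, h i = Polynomial.C (v i) * H := by
  obtain ⟨j, hj⟩ := Function.ne_iff.1 h0
  choose v hv using fun i ↦ exists_eq_C_mul_of_wronskian_eq_zero hj
    (sub_eq_zero.2 ((hh i j).trans (mul_comm _ _)))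
  exact ⟨v, h j, hj, hv⟩

theorem exists_ne_zero_ne_neg_one_eval_ne_zero {p : K[X]} (hp : p ≠ 0) :
    ∃ u : K, u ≠ 0 ∧ u ≠ -1 ∧ p.eval u ≠ 0 := by
  have hne : (Polynomial.X * (Polynomial.X + 1)) * p ≠ 0 :=
    mul_ne_zero (mul_ne_zero Polynomial.X_ne_zero X_add_one_ne_zero) hp
  obtain ⟨u, hu⟩ : ∃ u, ((Polynomial.X * (Polynomial.X + 1)) * p).eval u ≠ 0 := by
    by_contra! hu
    exact hne (Polynomial.funext (by simpa using hu))
  simp only [Polynomial.eval_mul, Polynomial.eval_add, Polynomial.eval_X, Polynomial.eval_one,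
    mul_ne_zero_iff, ne_eq, add_eq_zero_iff_eq_neg] at hu
  exact ⟨u, hu.1.1, hu.1.2, hu.2⟩

end Wronskian

section Descent

variable {K : Type*} [Field K]

theorem mem_lineIdeal_of_X_sub_C_mul_mem {ι : Type*} [Fintype ι] {d : ι → Fin 3 → ℕ} {k : ℕ}
    {u : K} (hu : u ≠ 0) (hu' : u ≠ -1)
    (heval : ∀ v : ι → K, ∑ i, v i = 0 →
      ∃ s ∈ syzygies K d (k + 1), ∀ i, (s i).eval u = v i) {p : K[X]}
    (hp : (Polynomial.X - Polynomial.C u) * p ∈ lineIdeal K d (k + 1)) : p ∈ lineIdeal K d k := by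
  obtain ⟨h, hh, hsum⟩ := mem_lineIdeal.1 hp
  obtain ⟨s, hs, hsu⟩ := heval (fun i ↦ (h i).eval u) (by
    rw [← Polynomial.eval_finsetSum, hsum]; simp)
  rw [mem_syzygies] at hs
  choose g hg hhs using fun i ↦ exists_eq_X_sub_C_mul_of_eval_eq_zero hu hu'
    (sub_mem (hh i) (hs.1 i)) (by rw [Polynomial.eval_sub, hsu, sub_self])
  refine mem_lineIdeal.2 ⟨g, hg, mul_left_cancel₀ (Polynomial.X_sub_C_ne_zero u) ?_⟩
  rw [Finset.mul_sum, ← hsum, ← Finset.sum_congr rfl fun i _ ↦ hhs i, Finset.sum_sub_distrib,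
    hs.2, sub_zero]

theorem lineIdeal_eq_degreeLT_of_eval {ι : Type*} [Fintype ι] {d : ι → Fin 3 → ℕ} {k : ℕ}
    (hd : ∀ v, ∃ i, d i v = 0) {u : K} (hu : u ≠ 0) (hu' : u ≠ -1)
    (heval : ∀ v : ι → K, ∑ i, v i = 0 →
      ∃ s ∈ syzygies K d (k + 1), ∀ i, (s i).eval u = v i) :
    lineIdeal K d k = degreeLT K (k + 1) := by
  obtain ⟨N, hN⟩ := exists_forall_lineIdeal_eq_degreeLT (K := K) hd
  refine Nat.decreasingInduction' (P := fun m ↦ lineIdeal K d m = degreeLT K (m + 1))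
    (fun m _ hkm ih ↦ lineIdeal_le_degreeLT.antisymm fun p hp ↦ ?_) (le_max_left k N)
    (hN _ (le_max_right k N))
  refine mem_lineIdeal_of_X_sub_C_mul_mem hu hu' (fun v hv ↦ ?_) (ih.ge ?_)
  · obtain ⟨s, hs, hsv⟩ := heval v hv
    exact ⟨s, syzygies_mono (Nat.succ_le_succ hkm) hs, hsv⟩
  · rw [mem_degreeLT, Polynomial.degree_mul, Polynomial.degree_X_sub_C] at *
    rw [Nat.cast_succ, add_comm]
    exact WithBot.add_lt_add_right (by simp) hp

variable {n : ℕ} {d : Fin (n + 1) → Fin 3 → ℕ}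

/-- The maximal minor, with column `i` deleted, of the matrix whose rows are the `n` given families
of `n + 1` polynomials. -/
noncomputable def syzygyMinor (s : Fin n → Fin (n + 1) → K[X]) (i : Fin (n + 1)) : K[X] :=
  ((Matrix.of s).submatrix id i.succAbove).det

theorem syzygyMinor_eq_negOnePow_smul {s : Fin n → Fin (n + 1) → K[X]}
    (hs : ∀ l, ∑ i, s l i = 0) (i j : Fin (n + 1)) :
    syzygyMinor s i = Int.negOnePow (i - j) • syzygyMinor s j :=
  Matrix.submatrix_succAbove_det_eq_negOnePow_submatrix_succAbove_det' _ hs i j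

theorem lineIdeal_eq_degreeLT_of_syzygyMinor_ne_zero [CharZero K] {k : ℕ}
    (hd : ∀ v, ∃ i, d i v = 0) {s : Fin n → Fin (n + 1) → K[X]}
    (hs : ∀ l, s l ∈ syzygies K d (k + 1)) (hdet : syzygyMinor s 0 ≠ 0) :
    lineIdeal K d k = degreeLT K (k + 1) := by
  obtain ⟨u, hu, hu', hdet_u⟩ := exists_ne_zero_ne_neg_one_eval_ne_zero hdet
  refine lineIdeal_eq_degreeLT_of_eval hd hu hu' fun v hv ↦ ?_
  set M : Matrix (Fin n) (Fin n) K := .of fun l i ↦ (s l i.succ).eval u with hM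
  have hM_eval : M.det = (syzygyMinor s 0).eval u :=
    (RingHom.map_det (Polynomial.evalRingHom u) ((Matrix.of s).submatrix id _)).symm
  have hMdet : IsUnit M.det := (hM_eval ▸ hdet_u).isUnit
  set c := Matrix.vecMul (fun i : Fin n ↦ v i.succ) M⁻¹ with hc
  have hcM : Matrix.vecMul c M = fun i : Fin n ↦ v i.succ := by
    rw [hc, Matrix.vecMul_vecMul, Matrix.nonsing_inv_mul _ hMdet, Matrix.vecMul_one]
  set t := ∑ l, c l • s l with ht
  have htmem : t ∈ syzygies K d (k + 1) := sum_mem fun l _ ↦ Submodule.smul_mem _ _ (hs l)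
  have htail : ∀ i : Fin n, (t i.succ).eval u = v i.succ := fun i ↦ by
    rw [← congrFun hcM i]
    simp [ht, hM, Matrix.vecMul, dotProduct, Polynomial.eval_finsetSum]
  refine ⟨t, htmem, Fin.cases ?_ htail⟩
  have hsum := congrArg (Polynomial.eval u) (mem_syzygies.1 htmem).2
  rw [Polynomial.eval_finsetSum, Fin.sum_univ_succ, Polynomial.eval_zero] at hsum
  rw [Fin.sum_univ_succ] at hv
  simp only [htail] at hsum
  linear_combination hsum - hv

theorem syzygyMinor_mem_lineMultiples {a : Fin n → ℕ} {s : Fin n → Fin (n + 1) → K[X]}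
    (hs : ∀ l, s l ∈ syzygies K d (a l)) (i : Fin (n + 1)) :
    syzygyMinor s i ∈ lineMultiples K (∑ l, a l) (∑ l, d (i.succAbove l)) := by
  rw [syzygyMinor, Matrix.det_apply]
  refine sum_mem fun σ _ ↦ zsmul_mem ?_ _
  rw [← Equiv.sum_comp σ a]
  exact prod_mem_lineMultiples _ fun l _ ↦ (mem_syzygies.1 (hs (σ l))).1 (i.succAbove l)

theorem sum_le_of_syzygyMinor_ne_zero (hd : ∀ v, ∃ i, d i v = 0) {a : Fin n → ℕ}
    {s : Fin n → Fin (n + 1) → K[X]} (hs : ∀ l, s l ∈ syzygies K d (a l))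
    (hdet : syzygyMinor s 0 ≠ 0) : ∑ i, ∑ v, d i v ≤ ∑ l, a l := by
  choose f hf using hd
  have hsum : ∀ l, ∑ i, s l i = 0 := fun l ↦ (mem_syzygies.1 (hs l)).2
  refine le_of_eq_of_le ?_ (sum_diagonal_le_of_mem_lineMultiples hdet
    (E := fun v ↦ ∑ l, d ((f v).succAbove l)) fun v ↦ ?_)
  · rw [Finset.sum_comm]
    refine Finset.sum_congr rfl fun v _ ↦ ?_
    rw [Finset.sum_apply, Fin.sum_univ_succAbove _ (f v), hf, zero_add]
  · have hmem := syzygyMinor_mem_lineMultiples hs (f v)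
    rw [syzygyMinor_eq_negOnePow_smul hsum (f v) 0] at hmem
    rcases Int.units_eq_one_or
        (Int.negOnePow (((f v : ℕ) : ℤ) - ((0 : Fin (n + 1)) : ℕ))) with h | h
    · simpa [h] using hmem
    · simpa [h] using hmem

end Descent

section FourGenerators

variable {K : Type*} [Field K] {d : Fin 4 → Fin 3 → ℕ} {k e : ℕ} {s t σ : Fin 4 → K[X]}
  {ℓ : Fin 4 → K}

theorem exists_nodup_of_ne : ∀ {i j : Fin 4}, i ≠ j → ∃ l m, [i, j, l, m].Nodup := by
  decide

theorem exists_nodup_of_pairwise_ne :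
    ∀ {i j l : Fin 4}, i ≠ j → i ≠ l → j ≠ l → ∃ m, [i, j, l, m].Nodup := by
  decide

theorem toFinset_eq_univ_of_nodup {i j l m : Fin 4} (h : [i, j, l, m].Nodup) :
    [i, j, l, m].toFinset = Finset.univ :=
  Finset.eq_univ_of_card _ (List.toFinset_card_of_nodup h)

theorem sum_univ_eq_of_nodup {M : Type*} [AddCommMonoid M] {i j l m : Fin 4}
    (h : [i, j, l, m].Nodup) (f : Fin 4 → M) : ∑ x, f x = f i + (f j + (f l + f m)) := by
  rw [← toFinset_eq_univ_of_nodup h, List.sum_toFinset f h]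
  simp

/-- A vanishing sum of four polynomials is unsplit if no two of its summands cancel, that is, if it
is not the juxtaposition of two shorter vanishing sums. -/
def Unsplit (h : Fin 4 → K[X]) : Prop :=
  ∀ i j, i ≠ j → h i + h j ≠ 0

theorem lineIdeal_eq_degreeLT_of_not_proportional [CharZero K]
    (hd : ∀ v, ∃ i j, i ≠ j ∧ d i v = 0 ∧ d j v = 0) {m : Fin 4}
    (hs : s ∈ syzygies K d (k + 1)) (ht : t ∈ syzygies K d (k + 1)) (hsm : s m = 0)
    (htm : t m = 0) (hst : ¬ Proportional s t) : lineIdeal K d k = degreeLT K (k + 1) := by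
  have hrestrict : ∀ r ∈ syzygies K d (k + 1), r m = 0 →
      r ∘ m.succAbove ∈ syzygies K (d ∘ m.succAbove) (k + 1) := by
    intro r hr hrm
    rw [mem_syzygies, Fin.sum_univ_succAbove _ m, hrm, zero_add] at hr
    exact mem_syzygies.2 ⟨fun i ↦ hr.1 _, hr.2⟩
  have hs' := hrestrict s hs hsm
  have ht' := hrestrict t ht htm
  refine lineIdeal_le_degreeLT.antisymm ?_
  refine le_of_eq_of_le ?_ (lineIdeal_comp_le m.succAbove)
  refine (lineIdeal_eq_degreeLT_of_syzygyMinor_ne_zero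
    (s := ![s ∘ m.succAbove, t ∘ m.succAbove]) (fun v ↦ ?_)
    (by simp [Fin.forall_fin_two, hs', ht']) fun hminor ↦ hst ?_).symm
  · obtain ⟨i, j, hij, hi, hj⟩ := hd v
    rcases Fin.eq_self_or_eq_succAbove m i with hmi | ⟨i, rfl⟩
    · obtain ⟨j, rfl⟩ := Fin.exists_succAbove_eq (hmi ▸ hij.symm)
      exact ⟨j, hj⟩
    · exact ⟨i, hi⟩
  · refine .of_comp_succAbove (mem_syzygies.1 hs).2 (mem_syzygies.1 ht).2 m
      (.of_comp_succAbove (mem_syzygies.1 hs').2 (mem_syzygies.1 ht').2 0 ?_)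
    rw [syzygyMinor, Matrix.det_fin_two] at hminor
    simp only [Matrix.submatrix_apply, Matrix.of_apply, id_eq, Matrix.cons_val_zero,
      Matrix.cons_val_one] at hminor
    intro i j
    fin_cases i <;> fin_cases j
    exacts [rfl, sub_eq_zero.1 hminor, (sub_eq_zero.1 hminor).symm, rfl]

theorem proportional_derivative_of_eulerDerivative {ι : Type*} {g : ι → K[X]}
    (hg : Proportional g fun i ↦ eulerDerivative (g i)) :
    Proportional g fun i ↦ derivative (g i) := by
  intro i j
  have hX : (Polynomial.X * (Polynomial.X + 1) : K[X]) ≠ 0 :=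
    mul_ne_zero Polynomial.X_ne_zero X_add_one_ne_zero
  refine mul_left_cancel₀ hX ?_
  have h := hg i j
  simp only [eulerDerivative_apply] at h
  linear_combination h

/-- A form `∑ i, ℓ i * r i` with constant coefficients vanishes on all syzygies of degree `k`. -/
def IsRelation (d : Fin 4 → Fin 3 → ℕ) (k : ℕ) (ℓ : Fin 4 → K) : Prop :=
  ∀ r ∈ syzygies K d k, ∑ i, Polynomial.C (ℓ i) * r i = 0

theorem crossProduct_proportional_derivative {s t : Fin 3 → K[X]}
    (hs : crossProduct s t ⬝ᵥ (fun i ↦ derivative (s i)) = 0)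
    (ht : crossProduct s t ⬝ᵥ (fun i ↦ derivative (t i)) = 0) :
    Proportional (crossProduct s t) fun i ↦ derivative (crossProduct s t i) := by
  rw [proportional_iff_crossProduct_eq_zero]
  simp only [cross_apply, dotProduct, Fin.sum_univ_three, Matrix.cons_val] at hs ht
  ext1 i
  fin_cases i <;>
    simp [cross_apply, Polynomial.derivative_sub, Polynomial.derivative_mul]
  · linear_combination s 0 * ht - t 0 * hs
  · linear_combination s 1 * ht - t 1 * hs
  · linear_combination s 2 * ht - t 2 * hs

theorem syzygyMinor_zero_eq_dotProduct (s t r : Fin 4 → K[X]) :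
    syzygyMinor ![s, t, r] 0 = crossProduct (Fin.tail s) (Fin.tail t) ⬝ᵥ Fin.tail r := by
  rw [syzygyMinor, Matrix.det_fin_three, cross_apply, dotProduct, Fin.sum_univ_three]
  simp only [Matrix.submatrix_apply, Matrix.of_apply, id_eq, Matrix.cons_val, Fin.zero_succAbove,
    Fin.tail]
  ring

theorem exists_isRelation [CharZero K] (hs : s ∈ syzygies K d e) (ht : t ∈ syzygies K d e)
    (hst : ¬ Proportional s t)
    (hminor : ∀ r ∈ syzygies K d (e + 1), syzygyMinor ![s, t, r] 0 = 0) :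
    ∃ ℓ : Fin 4 → K, (∃ i j, ℓ i ≠ ℓ j) ∧ IsRelation d (e + 1) ℓ := by
  set n : Fin 3 → K[X] := crossProduct (Fin.tail s) (Fin.tail t)
  have hn0 : n ≠ 0 := fun h ↦ hst (.of_comp_succAbove (mem_syzygies.1 hs).2
    (mem_syzygies.1 ht).2 0 (proportional_iff_crossProduct_eq_zero.2 h))
  have hdot : ∀ r ∈ syzygies K d (e + 1), n ⬝ᵥ Fin.tail r = 0 := fun r hr ↦ by
    rw [← hminor r hr, syzygyMinor_zero_eq_dotProduct]
  have hdot' : ∀ r ∈ syzygies K d e, n ⬝ᵥ (fun i ↦ derivative (Fin.tail r i)) = 0 := fun r hr ↦ by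
    have hX : (Polynomial.X * (Polynomial.X + 1) : K[X]) ≠ 0 :=
      mul_ne_zero Polynomial.X_ne_zero X_add_one_ne_zero
    have h := hdot _ (eulerDerivative_mem_syzygies hr)
    refine (mul_eq_zero.1 ?_).resolve_left hX
    simp only [dotProduct, Fin.tail, eulerDerivative_apply, Finset.mul_sum] at h ⊢
    rw [← h]
    exact Finset.sum_congr rfl fun i _ ↦ mul_left_comm _ _ _
  obtain ⟨v, H, hH, hv⟩ := exists_eq_C_mul_of_proportional_derivative hn0
    (crossProduct_proportional_derivative (hdot' s hs) (hdot' t ht))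
  refine ⟨Fin.cons 0 v, ?_, fun r hr ↦ ?_⟩
  · obtain ⟨j, hj⟩ := Function.ne_iff.1 hn0
    refine ⟨j.succ, 0, fun hvj ↦ hj ?_⟩
    rw [Fin.cons_succ, Fin.cons_zero] at hvj
    rw [hv, hvj, Polynomial.C_0, zero_mul, Pi.zero_apply]
  · refine (mul_eq_zero.1 ?_).resolve_left hH
    rw [Fin.sum_univ_succ, Fin.cons_zero, Polynomial.C_0, zero_mul, zero_add, Finset.mul_sum,
      ← hdot r hr]
    refine Finset.sum_congr rfl fun i _ ↦ ?_
    rw [Fin.cons_succ, hv, Fin.tail]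
    ring

theorem IsRelation.eq_zero_of_mem {p : K[X]} (hℓ : IsRelation d k ℓ) {i j : Fin 4}
    (hij : ℓ i ≠ ℓ j) (hi : p ∈ lineMultiples K k (d i)) (hj : p ∈ lineMultiples K k (d j)) :
    p = 0 := by
  have h := hℓ _ (single_sub_single_mem_syzygies hi hj)
  simp only [Pi.sub_apply, mul_sub, Finset.sum_sub_distrib, Pi.single_apply, mul_ite, mul_zero,
    Finset.sum_ite_eq', Finset.mem_univ, if_true] at h
  rw [← sub_mul, ← Polynomial.C_sub, mul_eq_zero, Polynomial.C_eq_zero, sub_eq_zero] at h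
  exact h.resolve_left hij

theorem IsRelation.lt_sum_of_injective (hℓ : IsRelation d k ℓ) (hinj : Function.Injective ℓ)
    {i j : Fin 4} (hij : i ≠ j) : k < ∑ v, (d i + d j) v := by
  by_contra! hk
  have hmem := lineMonomial_mem_lineMultiples (K := K) hk
  exact lineMonomial_ne_zero (hℓ.eq_zero_of_mem (hinj.ne hij)
    (lineMultiples_mono le_rfl (by simp) hmem)
    (lineMultiples_mono le_rfl (by simp) hmem))

theorem IsRelation.smul_minor_eq (hℓ : IsRelation d k ℓ) (hs : s ∈ syzygies K d k)
    (ht : t ∈ syzygies K d k) {i j l m : Fin 4} (hnodup : [i, j, l, m].Nodup) :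
    (ℓ j - ℓ m) • (s i * t j - s j * t i) = (ℓ m - ℓ l) • (s i * t l - s l * t i) := by
  have hs₀ := (mem_syzygies.1 hs).2
  have ht₀ := (mem_syzygies.1 ht).2
  have hs₁ := hℓ s hs
  have ht₁ := hℓ t ht
  rw [sum_univ_eq_of_nodup hnodup] at hs₀ ht₀ hs₁ ht₁
  simp only [Polynomial.smul_eq_C_mul, Polynomial.C_sub]
  linear_combination s i * ht₁ - t i * hs₁ - Polynomial.C (ℓ m) * (s i * ht₀ - t i * hs₀)

theorem IsRelation.exists_eq_smul_minor (hℓ : IsRelation d k ℓ) (hinj : Function.Injective ℓ)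
    (hs : s ∈ syzygies K d k) (ht : t ∈ syzygies K d k) {i j i' j' : Fin 4} (hij : i ≠ j)
    (hij' : i' ≠ j') :
    ∃ c : K, s i * t j - s j * t i = c • (s i' * t j' - s j' * t i') := by
  have hshift : ∀ {i j l : Fin 4}, i ≠ j → i ≠ l →
      ∃ c : K, s i * t j - s j * t i = c • (s i * t l - s l * t i) := by
    intro i j l hij hil
    rcases eq_or_ne j l with rfl | hjl
    · exact ⟨1, (one_smul K _).symm⟩
    obtain ⟨m, hm⟩ := exists_nodup_of_pairwise_ne hij hil hjl
    have hne : ℓ j - ℓ m ≠ 0 := sub_ne_zero.2 (hinj.ne (by rintro rfl; simp at hm))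
    exact ⟨(ℓ j - ℓ m)⁻¹ * (ℓ m - ℓ l), by
      rw [mul_smul, ← hℓ.smul_minor_eq hs ht hm, inv_smul_smul₀ hne]⟩
  rcases eq_or_ne i i' with rfl | hii'
  · exact hshift hij hij'
  · obtain ⟨c, hc⟩ := hshift hij hii'
    obtain ⟨c', hc'⟩ := hshift hii'.symm hij'
    refine ⟨-c * c', ?_⟩
    rw [mul_smul, ← hc', hc, neg_smul, ← smul_neg]
    congr 1
    ring

theorem IsRelation.proportional_of_injective (hd : ∀ v, ∃ i j, i ≠ j ∧ d i v = 0 ∧ d j v = 0)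
    (hℓ : IsRelation d k ℓ) (hinj : Function.Injective ℓ)
    (hs : s ∈ syzygies K d k) (ht : t ∈ syzygies K d k) : Proportional s t := by
  by_contra hst
  simp only [Proportional, not_forall] at hst
  obtain ⟨i, j, hst⟩ := hst
  have hij : i ≠ j := by rintro rfl; exact hst rfl
  have hmem : ∀ l m, l ≠ m → s i * t j - s j * t i ∈ lineMultiples K (k + k) (d l + d m) := by
    intro l m hlm
    obtain ⟨c, hc⟩ := hℓ.exists_eq_smul_minor hinj hs ht hij hlm
    rw [hc]
    rw [mem_syzygies] at hs ht
    refine Submodule.smul_mem _ c (sub_mem (mul_mem_lineMultiples (hs.1 l) (ht.1 m)) ?_)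
    rw [add_comm (d l)]
    exact mul_mem_lineMultiples (hs.1 m) (ht.1 l)
  have hcompl : ∀ v, ∃ l m, l ≠ m ∧ ∑ x, d x v = (d l + d m) v := by
    intro v
    obtain ⟨i, j, hij, hi, hj⟩ := hd v
    obtain ⟨l, m, hnodup⟩ := exists_nodup_of_ne hij
    refine ⟨l, m, by rintro rfl; simp at hnodup, ?_⟩
    rw [sum_univ_eq_of_nodup hnodup fun x ↦ d x v, hi, hj, zero_add, zero_add, Pi.add_apply]
  choose l m hlm hsum using hcompl
  have hle := sum_diagonal_le_of_mem_lineMultiples (sub_ne_zero.2 hst)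
    fun v ↦ hmem (l v) (m v) (hlm v)
  have h01 := hℓ.lt_sum_of_injective hinj (show (0 : Fin 4) ≠ 1 by decide)
  have h23 := hℓ.lt_sum_of_injective hinj (show (2 : Fin 4) ≠ 3 by decide)
  simp only [← hsum, Fin.sum_univ_three, Fin.sum_univ_four, Pi.add_apply] at hle h01 h23
  omega

theorem IsRelation.forall_eq_zero_or_forall_add_eq_zero (hℓ : IsRelation d k ℓ)
    (hne : ∃ i j, ℓ i ≠ ℓ j) (hinj : ¬ Function.Injective ℓ) :
    (∃ i, ∀ r ∈ syzygies K d k, r i = 0) ∨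
      ∃ i j, i ≠ j ∧ ∀ r ∈ syzygies K d k, r i + r j = 0 := by
  obtain ⟨i, j, hℓij, hij⟩ : ∃ i j, ℓ i = ℓ j ∧ i ≠ j := by
    simpa [Function.Injective] using hinj
  obtain ⟨l, m, hnodup⟩ := exists_nodup_of_ne hij
  have hpair : ∀ r ∈ syzygies K d k, (ℓ l - ℓ i) • r l = (ℓ i - ℓ m) • r m := fun r hr ↦ by
    have h₀ := (mem_syzygies.1 hr).2
    have h₁ := hℓ r hr
    rw [sum_univ_eq_of_nodup hnodup] at h₀ h₁
    simp only [Polynomial.smul_eq_C_mul, Polynomial.C_sub, hℓij] at h₁ ⊢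
    linear_combination h₁ - Polynomial.C (ℓ j) * h₀
  rcases eq_or_ne (ℓ l) (ℓ i) with hl | hl <;> rcases eq_or_ne (ℓ m) (ℓ i) with hm | hm
  · refine absurd (fun x ↦ ?_ : ∀ x, ℓ x = ℓ i) fun h ↦ ?_
    · have hx : x ∈ [i, j, l, m].toFinset := toFinset_eq_univ_of_nodup hnodup ▸ Finset.mem_univ x
      simp only [List.mem_toFinset, List.mem_cons, List.not_mem_nil, or_false] at hx
      rcases hx with rfl | rfl | rfl | rfl
      exacts [rfl, hℓij.symm, hl, hm]
    · obtain ⟨x, y, hxy⟩ := hne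
      exact hxy ((h x).trans (h y).symm)
  · refine .inl ⟨m, fun r hr ↦ ?_⟩
    have := hpair r hr
    rw [hl, sub_self, zero_smul] at this
    exact (smul_eq_zero.1 this.symm).resolve_left (sub_ne_zero.2 hm.symm)
  · refine .inl ⟨l, fun r hr ↦ ?_⟩
    have := hpair r hr
    rw [hm, sub_self, zero_smul] at this
    exact (smul_eq_zero.1 this).resolve_left (sub_ne_zero.2 hl)
  · have hpair' : ∀ r ∈ syzygies K d k, r l = ((ℓ l - ℓ i)⁻¹ * (ℓ i - ℓ m)) • r m := fun r hr ↦ by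
      rw [mul_smul, ← hpair r hr, inv_smul_smul₀ (sub_ne_zero.2 hl)]
    rcases eq_or_ne (ℓ l) (ℓ m) with hlm | hlm
    · refine .inr ⟨l, m, by rintro rfl; simp at hnodup, fun r hr ↦ ?_⟩
      rw [hpair' r hr, hlm, ← neg_sub (ℓ m), mul_neg, inv_mul_cancel₀ (sub_ne_zero.2 hm),
        neg_one_smul, neg_add_cancel]
    · refine .inl ⟨l, fun r hr ↦ hℓ.eq_zero_of_mem hlm ((mem_syzygies.1 hr).1 l) ?_⟩
      rw [hpair' r hr]
      exact Submodule.smul_mem _ _ ((mem_syzygies.1 hr).1 m)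

theorem proportional_of_syzygyMinor_eq_zero [CharZero K]
    (hd : ∀ v, ∃ i j, i ≠ j ∧ d i v = 0 ∧ d j v = 0)
    (hJ : lineIdeal K d k ≠ degreeLT K (k + 1)) (hσ : σ ∈ syzygies K d k) (hunsplit : Unsplit σ)
    (hke : k ≤ e) (hek : e ≤ k + 1) (hs : s ∈ syzygies K d e) (ht : t ∈ syzygies K d e)
    (hminor : ∀ r ∈ syzygies K d (e + 1), syzygyMinor ![s, t, r] 0 = 0) : Proportional s t := by
  by_contra hst
  obtain ⟨ℓ, hne, hℓ⟩ := exists_isRelation hs ht hst hminor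
  replace hℓ : IsRelation d e ℓ := fun r hr ↦ hℓ r (syzygies_mono e.le_succ hr)
  by_cases hinj : Function.Injective ℓ
  · exact hst (hℓ.proportional_of_injective hd hinj hs ht)
  rcases hℓ.forall_eq_zero_or_forall_add_eq_zero hne hinj with ⟨i, hi⟩ | ⟨i, j, hij, hadd⟩
  · exact hJ (lineIdeal_eq_degreeLT_of_not_proportional hd (syzygies_mono hek hs)
      (syzygies_mono hek ht) (hi s hs) (hi t ht) hst)
  · exact hunsplit i j hij (hadd σ (syzygies_mono hke hσ))

theorem proportional_of_lineIdeal_ne_degreeLT [CharZero K]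
    (hd : ∀ v, ∃ i j, i ≠ j ∧ d i v = 0 ∧ d j v = 0)
    (hJ : lineIdeal K d k ≠ degreeLT K (k + 1)) (hσ : σ ∈ syzygies K d k) (hunsplit : Unsplit σ)
    (hs : s ∈ syzygies K d k) (ht : t ∈ syzygies K d k) : Proportional s t := by
  refine proportional_of_syzygyMinor_eq_zero hd hJ hσ hunsplit le_rfl k.le_succ hs ht fun r hr ↦ ?_
  by_contra hminor
  refine hJ (lineIdeal_eq_degreeLT_of_syzygyMinor_ne_zero
    (fun v ↦ (hd v).imp fun _ ⟨_, _, hi, _⟩ ↦ hi) ?_ hminor)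
  intro l
  fin_cases l
  exacts [syzygies_mono k.le_succ hs, syzygies_mono k.le_succ ht, hr]

theorem Unsplit.ne_zero (hunsplit : Unsplit σ) : σ ≠ 0 := by
  rintro rfl
  exact hunsplit 0 1 (by decide) (add_zero 0)

theorem Unsplit.ne_C_mul (hunsplit : Unsplit σ) (hσ : σ ∈ syzygies K d k)
    (hprop : ∀ g ∈ syzygies K d k, Proportional g σ) (v : Fin 4 → K) (H : K[X]) :
    ¬ ∀ i, σ i = Polynomial.C (v i) * H := by
  intro hv
  have hmem : ∀ i, v i ≠ 0 → H ∈ lineMultiples K k (d i) := fun i hi ↦ by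
    have h := Submodule.smul_mem _ (v i)⁻¹ ((mem_syzygies.1 hσ).1 i)
    rwa [hv, ← Polynomial.smul_eq_C_mul, inv_smul_smul₀ hi] at h
  have hne : ∀ i j, i ≠ j → v i ≠ 0 ∨ v j ≠ 0 := fun i j hij ↦ by
    by_contra! h
    exact hunsplit i j hij (by rw [hv, hv, h.1, h.2, Polynomial.C_0, zero_mul, add_zero])
  have hH : H ≠ 0 := fun h ↦ hunsplit.ne_zero (funext fun i ↦ by rw [hv, h, mul_zero]; rfl)
  obtain ⟨i, j, hij, hi, hj⟩ : ∃ i j, i ≠ j ∧ v i ≠ 0 ∧ v j ≠ 0 := by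
    rcases hne 0 1 (by decide) with hi | hi <;> rcases hne 2 3 (by decide) with hj | hj
    exacts [⟨0, 2, by decide, hi, hj⟩, ⟨0, 3, by decide, hi, hj⟩, ⟨1, 2, by decide, hi, hj⟩,
      ⟨1, 3, by decide, hi, hj⟩]
  have hP := hprop _ (single_sub_single_mem_syzygies (hmem i hi) (hmem j hj))
  have hzero : ∀ l, i ≠ l → j ≠ l → σ l = 0 := fun l hil hjl ↦ by
    have h := hP i l
    simpa [Pi.single_apply, hij, hil.symm, hjl.symm, hH] using h
  obtain ⟨l, m, hnodup⟩ := exists_nodup_of_ne hij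
  simp only [List.nodup_cons, List.mem_cons, not_or, List.not_mem_nil] at hnodup
  exact hunsplit l m hnodup.2.2.1.1
    (by rw [hzero l hnodup.1.2.1 hnodup.2.1.1, hzero m hnodup.1.2.2.1 hnodup.2.1.2.1, add_zero])

theorem Unsplit.not_proportional_eulerDerivative [CharZero K] (hunsplit : Unsplit σ)
    (hσ : σ ∈ syzygies K d k) (hprop : ∀ g ∈ syzygies K d k, Proportional g σ) :
    ¬ Proportional σ fun i ↦ eulerDerivative (σ i) := by
  intro h
  obtain ⟨v, H, -, hv⟩ := exists_eq_C_mul_of_proportional_derivative hunsplit.ne_zero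
    (proportional_derivative_of_eulerDerivative h)
  exact hunsplit.ne_C_mul hσ hprop v H hv

theorem syzygies_eq_bot_of_lineIdeal_succ_ne_degreeLT [CharZero K]
    (hd : ∀ v, ∃ i j, i ≠ j ∧ d i v = 0 ∧ d j v = 0)
    (hJ : lineIdeal K d (k + 1) ≠ degreeLT K (k + 2)) (hσ : σ ∈ syzygies K d (k + 1))
    (hunsplit : Unsplit σ) : syzygies K d k = ⊥ := by
  have hprop : ∀ g ∈ syzygies K d (k + 1), ∀ g' ∈ syzygies K d (k + 1), Proportional g g' :=
    fun g hg g' hg' ↦ proportional_of_lineIdeal_ne_degreeLT hd hJ hσ hunsplit hg hg'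
  refine (Submodule.eq_bot_iff _).2 fun g hg ↦ by_contra fun hg0 ↦ ?_
  have hg₁ := syzygies_mono k.le_succ hg
  obtain ⟨v, H, hH, hv⟩ := exists_eq_C_mul_of_proportional_derivative hg0
    (proportional_derivative_of_eulerDerivative (hprop g hg₁ _ (eulerDerivative_mem_syzygies hg)))
  obtain ⟨j, hj⟩ := Function.ne_iff.1 hg0
  have hvj : v j ≠ 0 := fun h ↦ hj (by rw [hv, h, Polynomial.C_0, zero_mul, Pi.zero_apply])
  refine hunsplit.ne_C_mul hσ (fun g hg ↦ hprop g hg σ hσ) (fun i ↦ (v j)⁻¹ * v i) (σ j) fun i ↦ ?_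
  have h := hprop σ hσ g hg₁ i j
  simp only [hv] at h
  refine mul_right_cancel₀ hH (mul_left_cancel₀ (Polynomial.C_ne_zero.2 hvj) ?_)
  rw [Polynomial.C_mul]
  have hinv : Polynomial.C (v j) * Polynomial.C (v j)⁻¹ = 1 := by
    rw [← Polynomial.C_mul, mul_inv_cancel₀ hvj, Polynomial.C_1]
  linear_combination h - Polynomial.C (v i) * σ j * H * hinv

end FourGenerators

theorem exists_eq_smul_of_proportional {K ι : Type*} [Field K] [CharZero K] [Fintype ι]
    {d : ι → Fin 3 → ℕ} {k : ℕ} {σ τ : ι → K[X]} (hbot : syzygies K d k = ⊥)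
    (hσ : σ ∈ syzygies K d (k + 1)) (hσ0 : σ ≠ 0) (hτ : τ ∈ syzygies K d (k + 1))
    (h : Proportional τ σ) : ∃ c : K, τ = c • σ := by
  obtain ⟨j, hj⟩ := Function.ne_iff.1 hσ0
  obtain ⟨u, hu, hu', huj⟩ := exists_ne_zero_ne_neg_one_eval_ne_zero hj
  refine ⟨(τ j).eval u / (σ j).eval u, ?_⟩
  set c := (τ j).eval u / (σ j).eval u with hc
  have hρ : τ - c • σ ∈ syzygies K d (k + 1) := sub_mem hτ (Submodule.smul_mem _ c hσ)
  have hroot : ∀ i, ((τ - c • σ) i).eval u = 0 := fun i ↦ by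
    have h := congrArg (Polynomial.eval u) (h i j)
    rw [Polynomial.eval_mul, Polynomial.eval_mul] at h
    rw [Pi.sub_apply, Pi.smul_apply, Polynomial.eval_sub, Polynomial.eval_smul, smul_eq_mul, hc,
      div_mul_eq_mul_div, ← h, mul_div_cancel_right₀ _ huj, sub_self]
  rw [mem_syzygies] at hρ
  choose g hg hρg using fun i ↦ exists_eq_X_sub_C_mul_of_eval_eq_zero hu hu' (hρ.1 i) (hroot i)
  have hg_mem : g ∈ syzygies K d k := by
    refine mem_syzygies.2 ⟨hg, mul_left_cancel₀ (Polynomial.X_sub_C_ne_zero u) ?_⟩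
    rw [Finset.mul_sum, mul_zero, ← hρ.2, Finset.sum_congr rfl fun i _ ↦ hρg i]
  rw [hbot, Submodule.mem_bot] at hg_mem
  refine sub_eq_zero.1 (funext fun i ↦ ?_)
  rw [hρg, hg_mem, Pi.zero_apply, mul_zero]

section Failure

variable {K : Type*} [Field K] [CharZero K] {d : Fin 4 → Fin 3 → ℕ} {k : ℕ} {σ : Fin 4 → K[X]}

theorem exists_syzygyMinor_ne_zero (hd : ∀ v, ∃ i j, i ≠ j ∧ d i v = 0 ∧ d j v = 0)
    (hJ : lineIdeal K d k ≠ degreeLT K (k + 1)) (hσ : σ ∈ syzygies K d k)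
    (hunsplit : Unsplit σ) :
    ∃ s : Fin 3 → Fin 4 → K[X],
      (∀ l : Fin 3, s l ∈ syzygies K d (k + l)) ∧ syzygyMinor s 0 ≠ 0 := by
  have hprop : ∀ g ∈ syzygies K d k, Proportional g σ := fun g hg ↦
    proportional_of_lineIdeal_ne_degreeLT hd hJ hσ hunsplit hg hσ
  by_contra! h
  refine hunsplit.not_proportional_eulerDerivative hσ hprop
    (proportional_of_syzygyMinor_eq_zero hd hJ hσ hunsplit k.le_succ le_rfl
      (syzygies_mono k.le_succ hσ) (eulerDerivative_mem_syzygies hσ) fun r hr ↦ h _ fun l ↦ ?_)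
  fin_cases l
  exacts [hσ, eulerDerivative_mem_syzygies hσ, hr]

theorem syzygies_succ_le_span_singleton (hd : ∀ v, ∃ i j, i ≠ j ∧ d i v = 0 ∧ d j v = 0)
    (hJ : lineIdeal K d (k + 1) ≠ degreeLT K (k + 2)) (hσ : σ ∈ syzygies K d (k + 1))
    (hunsplit : Unsplit σ) : syzygies K d (k + 1) ≤ Submodule.span K {σ} := by
  intro τ hτ
  obtain ⟨c, rfl⟩ := exists_eq_smul_of_proportional
    (syzygies_eq_bot_of_lineIdeal_succ_ne_degreeLT hd hJ hσ hunsplit) hσ hunsplit.ne_zero hτ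
    (proportional_of_lineIdeal_ne_degreeLT hd hJ hσ hunsplit hτ hσ)
  exact Submodule.mem_span_singleton.2 ⟨c, rfl⟩

theorem lineIdeal_add_two_eq_degreeLT (hd : ∀ v, ∃ i j, i ≠ j ∧ d i v = 0 ∧ d j v = 0)
    (hJ : lineIdeal K d (k + 1) ≠ degreeLT K (k + 2)) (hσ : σ ∈ syzygies K d (k + 1))
    (hunsplit : Unsplit σ) : lineIdeal K d (k + 2) = degreeLT K (k + 3) := by
  obtain ⟨s, hs, hdet⟩ := exists_syzygyMinor_ne_zero hd hJ hσ hunsplit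
  exact lineIdeal_eq_degreeLT_of_syzygyMinor_ne_zero
    (fun v ↦ (hd v).imp fun _ ⟨_, _, hi, _⟩ ↦ hi)
    (fun l ↦ syzygies_mono (by omega) (hs l)) hdet

theorem le_finrank_lineIdeal_succ_add_sum (hd : ∀ v, ∃ i j, i ≠ j ∧ d i v = 0 ∧ d j v = 0)
    (hJ : lineIdeal K d (k + 1) ≠ degreeLT K (k + 2)) (hσ : σ ∈ syzygies K d (k + 1))
    (hunsplit : Unsplit σ) :
    4 * (k + 2) ≤ Module.finrank K (lineIdeal K d (k + 1)) + 1 + ∑ i, ∑ v, d i v := by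
  have hsyz : Module.finrank K (syzygies K d (k + 1)) ≤ 1 :=
    (Submodule.finrank_mono (syzygies_succ_le_span_singleton hd hJ hσ hunsplit)).trans
      (finrank_span_singleton hunsplit.ne_zero).le
  have hcount := sum_finrank_lineMultiples (K := K) (d := d) (k := k + 1)
  have hle : ∀ i, k + 2 ≤ Module.finrank K (lineMultiples K (k + 1) (d i)) + ∑ v, d i v := fun i ↦
    Nat.sub_le_iff_le_add.1 le_finrank_lineMultiples
  have hsum := Finset.sum_le_sum fun i (_ : i ∈ Finset.univ) ↦ hle i
  rw [Finset.sum_add_distrib (f := fun i ↦ Module.finrank K (lineMultiples K (k + 1) (d i))),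
    hcount, Finset.sum_const, Finset.card_univ, Fintype.card_fin, smul_eq_mul] at hsum
  omega

theorem sum_exponents_eq (hd : ∀ v, ∃ i j, i ≠ j ∧ d i v = 0 ∧ d j v = 0)
    (hJ : lineIdeal K d (k + 1) ≠ degreeLT K (k + 2)) (hσ : σ ∈ syzygies K d (k + 1))
    (hunsplit : Unsplit σ) : ∑ i, ∑ v, d i v = 3 * (k + 2) := by
  obtain ⟨s, hs, hdet⟩ := exists_syzygyMinor_ne_zero hd hJ hσ hunsplit
  have hle : ∑ i, ∑ v, d i v ≤ ∑ l : Fin 3, (k + 1 + l) :=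
    sum_le_of_syzygyMinor_ne_zero (fun v ↦ (hd v).imp fun _ ⟨_, _, hi, _⟩ ↦ hi) hs hdet
  have hge := le_finrank_lineIdeal_succ_add_sum hd hJ hσ hunsplit
  have hlt := finrank_lineIdeal_lt hJ
  rw [Fin.sum_univ_three] at hle
  simp only [Fin.val_zero, Fin.val_one, Fin.val_two] at hle
  omega

theorem succ_le_finrank_lineIdeal_succ (hd : ∀ v, ∃ i j, i ≠ j ∧ d i v = 0 ∧ d j v = 0)
    (hJ : lineIdeal K d (k + 1) ≠ degreeLT K (k + 2)) (hσ : σ ∈ syzygies K d (k + 1))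
    (hunsplit : Unsplit σ) : k + 1 ≤ Module.finrank K (lineIdeal K d (k + 1)) := by
  have hge := le_finrank_lineIdeal_succ_add_sum hd hJ hσ hunsplit
  rw [sum_exponents_eq hd hJ hσ hunsplit] at hge
  omega

end Failure

section GradedPieces

variable {K : Type*} [Field K] {n : ℕ} {I : Ideal (MvPolynomial (Fin n) K)} {v w : Fin n → K}
  {k l : ℕ}

/-- The linear form with coefficients `v`. -/
noncomputable def linearForm (v : Fin n → K) : MvPolynomial (Fin n) K :=
  ∑ i, C (v i) * X i

theorem isHomogeneous_linearForm : (linearForm v).IsHomogeneous 1 :=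
  IsHomogeneous.sum _ _ _ fun i _ ↦ isHomogeneous_C_mul_X (v i) i

theorem exists_eq_linearForm {y : MvPolynomial (Fin n) K} (hy : y.IsHomogeneous 1) :
    ∃ v, y = linearForm v := by
  rw [← mem_homogeneousSubmodule, homogeneousSubmodule_one_eq_span_X,
    Submodule.mem_span_range_iff_exists_fun] at hy
  obtain ⟨v, rfl⟩ := hy
  exact ⟨v, by simp only [linearForm, smul_eq_C_mul]⟩

theorem linearForm_sub_smul (μ : K) : linearForm (v - μ • w) = linearForm v - μ • linearForm w := by
  simp only [linearForm, Pi.sub_apply, Pi.smul_apply, smul_eq_mul, C_sub, C_mul, sub_mul, mul_assoc,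
    Finset.sum_sub_distrib, Finset.smul_sum, smul_eq_C_mul]

theorem linearForm_mul_mem (f : homogeneousSubmodule (Fin n) K k) :
    linearForm v * f ∈ homogeneousSubmodule (Fin n) K (k + 1) :=
  add_comm 1 k ▸ isHomogeneous_linearForm.mul f.2

/-- The degree `k` part of the quotient by `I`. -/
noncomputable def gradedPiece (I : Ideal (MvPolynomial (Fin n) K)) (k : ℕ) :
    Submodule K (MvPolynomial (Fin n) K ⧸ I) :=
  (homogeneousSubmodule (Fin n) K k).map (Ideal.Quotient.mkₐ K I).toLinearMap

instance : FiniteDimensional K (gradedPiece I k) :=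
  Module.Finite.iff_fg.2 ((homogeneousSubmodule_fg (Fin n) K k).map _)

/-- The class in the degree `k` part of the quotient by `I` of a form of degree `k`. -/
noncomputable def gradedMk (I : Ideal (MvPolynomial (Fin n) K)) (k : ℕ) :
    homogeneousSubmodule (Fin n) K k →ₗ[K] gradedPiece I k :=
  (Ideal.Quotient.mkₐ K I).toLinearMap.submoduleMap _

theorem gradedMk_surjective : Function.Surjective (gradedMk I k) :=
  LinearMap.submoduleMap_surjective _ _

theorem gradedMk_eq_zero_iff {f : homogeneousSubmodule (Fin n) K k} :
    gradedMk I k f = 0 ↔ (f : MvPolynomial (Fin n) K) ∈ I := by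
  rw [← Ideal.Quotient.eq_zero_iff_mem, Subtype.ext_iff]
  rfl

theorem gradedMk_eq_iff {f g : homogeneousSubmodule (Fin n) K k} :
    gradedMk I k f = gradedMk I k g ↔ (f - g : MvPolynomial (Fin n) K) ∈ I := by
  rw [← sub_eq_zero, ← map_sub, gradedMk_eq_zero_iff]
  rfl

/-- Multiplication by the linear form with coefficients `v`, from the degree `k` part of the
quotient by `I` to the degree `k + 1` part. -/
noncomputable def mulForm (I : Ideal (MvPolynomial (Fin n) K)) (v : Fin n → K) (k : ℕ) :
    gradedPiece I k →ₗ[K] gradedPiece I (k + 1) :=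
  (LinearMap.mulLeft K (Ideal.Quotient.mkₐ K I (linearForm v))).restrict (by
    rintro _ ⟨f, hf, rfl⟩
    exact ⟨linearForm v * f, linearForm_mul_mem ⟨f, hf⟩,
      map_mul (Ideal.Quotient.mkₐ K I) _ _⟩)

theorem mulForm_gradedMk (f : homogeneousSubmodule (Fin n) K k) :
    mulForm I v k (gradedMk I k f) = gradedMk I (k + 1) ⟨linearForm v * f, linearForm_mul_mem f⟩ :=
  rfl

theorem mulForm_sub_smul (μ : K) : mulForm I (v - μ • w) k = mulForm I v k - μ • mulForm I w k := by
  ext x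
  change Ideal.Quotient.mkₐ K I (linearForm (v - μ • w)) * (x : _ ⧸ I) =
    Ideal.Quotient.mkₐ K I (linearForm v) * x - μ • (Ideal.Quotient.mkₐ K I (linearForm w) * x)
  rw [linearForm_sub_smul, map_sub, map_smul, sub_mul, smul_mul_assoc]

theorem injective_mulForm_iff : Function.Injective (mulForm I v k) ↔
    ∀ f : MvPolynomial (Fin n) K, f.IsHomogeneous k → linearForm v * f ∈ I → f ∈ I := by
  rw [injective_iff_map_eq_zero, gradedMk_surjective.forall]
  simp only [mulForm_gradedMk, gradedMk_eq_zero_iff, Subtype.forall, mem_homogeneousSubmodule]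

theorem surjective_mulForm_iff : Function.Surjective (mulForm I v k) ↔
    ∀ g : MvPolynomial (Fin n) K, g.IsHomogeneous (k + 1) →
      ∃ f : MvPolynomial (Fin n) K, f.IsHomogeneous k ∧ g - linearForm v * f ∈ I := by
  rw [Function.Surjective, gradedMk_surjective.forall]
  refine Subtype.forall.trans (forall₂_congr fun g hg ↦ ?_)
  rw [gradedMk_surjective.exists]
  simp only [mulForm_gradedMk, eq_comm, gradedMk_eq_iff, Subtype.exists, mem_homogeneousSubmodule,
    exists_prop]

theorem wlp_iff : WLP I ↔ ∃ v : Fin n → K, ∀ k,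
    Function.Injective (mulForm I v k) ∨ Function.Surjective (mulForm I v k) := by
  simp only [injective_mulForm_iff, surjective_mulForm_iff]
  constructor
  · rintro ⟨y, hy, h⟩
    obtain ⟨v, rfl⟩ := exists_eq_linearForm hy
    exact ⟨v, h⟩
  · exact fun ⟨v, h⟩ ↦ ⟨linearForm v, isHomogeneous_linearForm, h⟩

theorem hdim_le_succ_of_injective (h : Function.Injective (mulForm I v k)) :
    hdim K n I k ≤ hdim K n I (k + 1) :=
  LinearMap.finrank_le_finrank_of_injective (R := K) (M' := gradedPiece I (k + 1)) h

theorem hdim_succ_le_of_surjective (h : Function.Surjective (mulForm I v k)) :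
    hdim K n I (k + 1) ≤ hdim K n I k :=
  LinearMap.finrank_le_finrank_of_surjective (R := K) (M := gradedPiece I k) h

theorem surjective_mulForm_succ (h : Function.Surjective (mulForm I v k)) :
    Function.Surjective (mulForm I v (k + 1)) := by
  rw [surjective_mulForm_iff] at h ⊢
  have hmul : homogeneousSubmodule (Fin n) K (k + 1 + 1) =
      homogeneousSubmodule (Fin n) K (k + 1) * homogeneousSubmodule (Fin n) K 1 := by
    rw [← homogeneousSubmodule_one_pow K (k + 1), ← homogeneousSubmodule_one_pow K (k + 1 + 1),
      pow_succ _ (k + 1)]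
  intro g hg
  rw [← mem_homogeneousSubmodule, hmul] at hg
  refine Submodule.mul_induction_on hg (fun p hp q hq ↦ ?_) ?_
  · obtain ⟨f, hf, hpf⟩ := h p hp
    refine ⟨f * q, hf.mul hq, ?_⟩
    rw [← mul_assoc, ← sub_mul]
    exact Ideal.mul_mem_right _ _ hpf
  · rintro p q ⟨f, hf, hpf⟩ ⟨f', hf', hqf'⟩
    refine ⟨f + f', hf.add hf', ?_⟩
    rw [mul_add, add_sub_add_comm]
    exact Ideal.add_mem _ hpf hqf'

theorem surjective_mulForm_of_le (hkl : k ≤ l) (h : Function.Surjective (mulForm I v k)) :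
    Function.Surjective (mulForm I v l) :=
  Nat.le_induction h (fun _ _ ↦ surjective_mulForm_succ) l hkl

theorem hdim_le_of_forall_injective_of_surjective
    (hinj : ∀ j < k, Function.Injective (mulForm I v j)) (hk : hdim K n I (k + 1) ≤ hdim K n I k)
    (hsurj : Function.Surjective (mulForm I v (k + 1))) (l : ℕ) : hdim K n I l ≤ hdim K n I k := by
  rcases le_or_gt l k with hl | hl
  · induction hl using Nat.decreasingInduction with
    | self => exact le_rfl
    | of_succ j hj ih => exact (hdim_le_succ_of_injective (hinj j hj)).trans ih
  · induction l, hl using Nat.le_induction with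
    | base => exact hk
    | succ l hl ih =>
      exact (hdim_succ_le_of_surjective (surjective_mulForm_of_le hl hsurj)).trans ih

/-- If multiplication by `v` were injective, hence bijective, then every `μ` such that `1 - μ • v`
has nonzero coefficients would be an eigenvalue of multiplication by `1` followed by its inverse. -/
theorem not_injective_mulForm_of_forall_ne_zero [Infinite K]
    (hdim_eq : hdim K n I (k + 1) = hdim K n I k)
    (h : ∀ v : Fin n → K, (∀ i, v i ≠ 0) → ¬ Function.Injective (mulForm I v k)) (v : Fin n → K) :
    ¬ Function.Injective (mulForm I v k) := by
  intro hv
  let e := LinearEquiv.ofInjectiveOfFinrankEq (mulForm I v k) hv hdim_eq.symm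
  let T : Module.End K (gradedPiece I k) := e.symm.toLinearMap ∘ₗ mulForm I 1 k
  have hbad : ({μ | T.HasEigenvalue μ} ∪ Set.range v⁻¹).Finite :=
    (Module.End.finite_hasEigenvalue T).union (Set.finite_range _)
  obtain ⟨μ, hμ⟩ := hbad.infinite_compl.nonempty
  rw [Set.mem_compl_iff, Set.mem_union, not_or] at hμ
  have hne : ∀ i, (1 - μ • v) i ≠ 0 := fun i hi ↦
    hμ.2 ⟨i, (eq_inv_of_mul_eq_one_left (sub_eq_zero.1 hi).symm).symm⟩
  have hker := h _ hne
  rw [mulForm_sub_smul, injective_iff_map_eq_zero] at hker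
  push Not at hker
  obtain ⟨x, hx, hx0⟩ := hker
  refine hμ.1 (Module.End.hasEigenvalue_of_hasEigenvector (x := x)
    ⟨Module.End.mem_eigenspace_iff.2 ?_, hx0⟩)
  rw [LinearMap.sub_apply, LinearMap.smul_apply, sub_eq_zero] at hx
  exact (LinearEquiv.symm_apply_eq e).2 (hx.trans (map_smul e μ x).symm)

end GradedPieces

section Homogeneous

variable {K σ : Type*} [Field K] {m f g : MvPolynomial σ K} {j k : ℕ}

theorem homogeneousComponent_mul_left (hm : m.IsHomogeneous j) :
    homogeneousComponent k (m * f) = if j ≤ k then m * homogeneousComponent (k - j) f else 0 := by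
  let _ := MvPolynomial.gradedAlgebra (R := K) (σ := σ)
  have hdecompose : ∀ (p : MvPolynomial σ K) (i : ℕ), homogeneousComponent i p =
      DirectSum.decompose (homogeneousSubmodule σ K) p i := fun p i ↦
    (decomposition.decompose'_apply p i).symm
  rw [hdecompose, hdecompose]
  exact DirectSum.coe_decompose_mul_of_left_mem (homogeneousSubmodule σ K) k hm

theorem exists_isHomogeneous_eq_mul_of_dvd (hm : m.IsHomogeneous j) (hg : g.IsHomogeneous k)
    (hdvd : m ∣ g) : ∃ f, f.IsHomogeneous (k - j) ∧ g = m * f := by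
  obtain ⟨f, rfl⟩ := hdvd
  have hself := homogeneousComponent_eq_self hg
  rw [homogeneousComponent_mul_left hm] at hself
  split_ifs at hself with hjk
  · exact ⟨_, homogeneousComponent_isHomogeneous _ f, hself.symm⟩
  · exact ⟨0, isHomogeneous_zero σ K _, by rw [← hself, mul_zero]⟩

theorem dvd_homogeneousComponent (hm : m.IsHomogeneous j) (hdvd : m ∣ f) :
    m ∣ homogeneousComponent k f := by
  obtain ⟨f, rfl⟩ := hdvd
  rw [homogeneousComponent_mul_left hm]
  split_ifs
  exacts [dvd_mul_right _ _, dvd_zero _]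

end Homogeneous

section MonomialIdeal

variable {K : Type*} [Field K] {n : ℕ} {e e' : Fin n → ℕ} {f g : MvPolynomial (Fin n) K}
  {ι : Type*} {d : ι → Fin n → ℕ} {v w : Fin n → K} {k : ℕ}

/-- The monomial with exponents `e`. -/
noncomputable def powerProduct (K : Type*) [Field K] (e : Fin n → ℕ) : MvPolynomial (Fin n) K :=
  ∏ v, X v ^ e v

theorem isHomogeneous_powerProduct : (powerProduct K e).IsHomogeneous (∑ v, e v) :=
  IsHomogeneous.prod _ _ _ fun v _ ↦ isHomogeneous_X_pow v (e v)

theorem powerProduct_dvd_iff : powerProduct K e ∣ f ↔ ∀ v, X v ^ e v ∣ f := by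
  refine ⟨fun h v ↦ (Finset.dvd_prod_of_mem _ (Finset.mem_univ v)).trans h,
    Fintype.prod_dvd_of_isRelPrime fun v w hvw ↦ IsRelPrime.pow ?_⟩
  rw [(X_prime (i := v)).irreducible.isRelPrime_iff_not_dvd, X_dvd_X]
  exact hvw

theorem powerProduct_dvd_powerProduct (h : e ≤ e') : powerProduct K e ∣ powerProduct K e' :=
  Finset.prod_dvd_prod_of_dvd _ _ fun v _ ↦ pow_dvd_pow _ (h v)

theorem powerProduct_dvd_of_dvd_mul (hg : ∀ v, ¬ X v ∣ g) (h : powerProduct K e ∣ g * f) :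
    powerProduct K e ∣ f := by
  rw [powerProduct_dvd_iff] at h ⊢
  exact fun v ↦ X_prime.pow_dvd_of_dvd_mul_left _ (hg v) (h v)

/-- The ideal generated by the monomials with exponents `d i`. -/
noncomputable def monomialIdeal (K : Type*) [Field K] (d : ι → Fin n → ℕ) :
    Ideal (MvPolynomial (Fin n) K) :=
  Ideal.span (Set.range fun i ↦ powerProduct K (d i))

theorem mem_monomialIdeal_of_dvd {i : ι} (h : powerProduct K (d i) ∣ f) : f ∈ monomialIdeal K d :=
  Ideal.mem_of_dvd _ h (Ideal.subset_span ⟨i, rfl⟩)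

/-- The forms of degree `k` divisible by the monomial with exponents `e`. -/
noncomputable def monomialMultiples (K : Type*) [Field K] (k : ℕ) (e : Fin n → ℕ) :
    Submodule K (MvPolynomial (Fin n) K) :=
  (Ideal.span {powerProduct K e}).restrictScalars K ⊓ homogeneousSubmodule (Fin n) K k

theorem mem_monomialMultiples :
    f ∈ monomialMultiples K k e ↔ powerProduct K e ∣ f ∧ f.IsHomogeneous k := by
  rw [monomialMultiples, Submodule.mem_inf, Submodule.restrictScalars_mem,
    Ideal.mem_span_singleton, mem_homogeneousSubmodule]

theorem sum_mem_monomialIdeal [Fintype ι] {H : ι → MvPolynomial (Fin n) K}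
    (hH : ∀ i, H i ∈ monomialMultiples K k (d i)) : ∑ i, H i ∈ monomialIdeal K d :=
  sum_mem fun i _ ↦ mem_monomialIdeal_of_dvd (mem_monomialMultiples.1 (hH i)).1

theorem exists_sum_eq_of_mem_monomialIdeal [Fintype ι] (hf : f.IsHomogeneous k)
    (hfI : f ∈ monomialIdeal K d) :
    ∃ H : ι → MvPolynomial (Fin n) K, (∀ i, H i ∈ monomialMultiples K k (d i)) ∧ ∑ i, H i = f := by
  obtain ⟨c, rfl⟩ := Ideal.mem_span_range_iff_exists_fun.1 hfI
  refine ⟨fun i ↦ homogeneousComponent k (c i * powerProduct K (d i)), fun i ↦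
    mem_monomialMultiples.2 ⟨dvd_homogeneousComponent isHomogeneous_powerProduct
      (dvd_mul_left _ _), homogeneousComponent_isHomogeneous k _⟩, ?_⟩
  rw [← map_sum, homogeneousComponent_eq_self hf]

/-- The substitution multiplying each variable `X i` by the scalar `v i`. -/
noncomputable def rescale (v : Fin n → K) : MvPolynomial (Fin n) K →ₐ[K] MvPolynomial (Fin n) K :=
  aeval fun i ↦ C (v i) * X i

theorem rescale_X (i : Fin n) : rescale v (X i) = C (v i) * X i :=
  aeval_X _ i

theorem isHomogeneous_rescale (hf : f.IsHomogeneous k) : (rescale v f).IsHomogeneous k := by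
  simpa only [rescale, one_mul] using hf.aeval _ fun i ↦ isHomogeneous_C_mul_X (v i) i

theorem rescale_powerProduct :
    rescale v (powerProduct K e) = C (∏ i, v i ^ e i) * powerProduct K e := by
  simp only [powerProduct, map_prod, map_pow, rescale_X, mul_pow, Finset.prod_mul_distrib]

theorem rescale_linearForm : rescale v (linearForm w) = linearForm (w * v) := by
  simp only [linearForm, map_sum, map_mul, rescale_X, algHom_C, algebraMap_eq, Pi.mul_apply,
    mul_assoc]

theorem rescale_rescale : rescale v (rescale w f) = rescale (w * v) f := by
  refine DFunLike.congr_fun (f := (rescale v).comp (rescale w)) (algHom_ext fun i ↦ ?_) f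
  simp only [AlgHom.comp_apply, rescale_X, map_mul, algHom_C, algebraMap_eq, Pi.mul_apply,
    mul_assoc]

theorem rescale_one : rescale 1 f = f := by
  refine DFunLike.congr_fun (g := AlgHom.id K _) (algHom_ext fun i ↦ ?_) f
  rw [rescale_X, Pi.one_apply, C_1, one_mul, AlgHom.id_apply]

theorem rescale_mem_monomialIdeal (hf : f ∈ monomialIdeal K d) :
    rescale v f ∈ monomialIdeal K d := by
  have hle : monomialIdeal K d ≤ (monomialIdeal K d).comap (rescale v) := by
    refine Ideal.span_le.2 ?_
    rintro _ ⟨i, rfl⟩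
    rw [SetLike.mem_coe, Ideal.mem_comap, rescale_powerProduct]
    exact mem_monomialIdeal_of_dvd (dvd_mul_left _ _)
  exact hle hf

theorem injective_mulForm_of_injective_mul (hv : ∀ i, v i ≠ 0)
    (h : Function.Injective (mulForm (monomialIdeal K d) (w * v) k)) :
    Function.Injective (mulForm (monomialIdeal K d) w k) := by
  rw [injective_mulForm_iff] at h ⊢
  intro f hf hwf
  have hmem := rescale_mem_monomialIdeal (v := v) hwf
  rw [map_mul, rescale_linearForm] at hmem
  have hinv : v * v⁻¹ = 1 := funext fun i ↦ mul_inv_cancel₀ (hv i)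
  rw [← rescale_one (f := f), ← hinv, ← rescale_rescale]
  exact rescale_mem_monomialIdeal (h _ (isHomogeneous_rescale hf) hmem)

end MonomialIdeal

section LineRestriction

variable {K : Type*} [Field K] {k : ℕ} {e e' : Fin 3 → ℕ} {f g : MvPolynomial (Fin 3) K} {h : K[X]}

/-- The coefficients of `X₀ + X₁ - X₂`, the equation of the line used to test the Lefschetz
property. -/
def lineCoeff (K : Type*) [Field K] : Fin 3 → K :=
  ![1, 1, -1]

theorem lineCoeff_ne_zero (v : Fin 3) : lineCoeff K v ≠ 0 := by
  fin_cases v <;> simp [lineCoeff]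

theorem linearForm_lineCoeff : linearForm (lineCoeff K) = X 0 + X 1 - X 2 := by
  simp [linearForm, lineCoeff, Fin.sum_univ_three, sub_eq_add_neg]

theorem linearForm_lineCoeff_ne_zero : linearForm (lineCoeff K) ≠ 0 := fun h ↦ by
  simpa [linearForm_lineCoeff] using congrArg (eval ![1, 0, 0]) h

theorem not_X_dvd_linearForm_lineCoeff (v : Fin 3) : ¬ X v ∣ linearForm (lineCoeff K) := by
  rintro ⟨g, hg⟩
  rw [linearForm_lineCoeff] at hg
  fin_cases v
  · simpa using congrArg (eval ![0, 1, 0]) hg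
  · simpa using congrArg (eval ![1, 0, 0]) hg
  · simpa using congrArg (eval ![1, 0, 0]) hg

/-- The restriction to the line `X₂ = X₀ + X₁`, by elimination of `X₂`. -/
noncomputable def eliminateLast (K : Type*) [Field K] :
    MvPolynomial (Fin 3) K →ₐ[K] MvPolynomial (Fin 2) K :=
  aeval ![X 0, X 1, X 0 + X 1]

/-- The restriction to the line `X₂ = X₀ + X₁`, in the chart `X₁ = 1`. -/
noncomputable def lineRestriction (K : Type*) [Field K] : MvPolynomial (Fin 3) K →ₐ[K] K[X] :=
  (aeval ![Polynomial.X, 1]).comp (eliminateLast K)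

theorem isHomogeneous_eliminateLast (hf : f.IsHomogeneous k) :
    (eliminateLast K f).IsHomogeneous k := by
  rw [← one_mul k]
  refine hf.aeval _ fun i ↦ ?_
  fin_cases i
  exacts [isHomogeneous_X K 0, isHomogeneous_X K 1, (isHomogeneous_X K 0).add (isHomogeneous_X K 1)]

theorem eliminateLast_rename (q : MvPolynomial (Fin 2) K) :
    eliminateLast K (rename Fin.castSucc q) = q := by
  refine DFunLike.congr_fun (f := (eliminateLast K).comp (rename Fin.castSucc))
    (g := AlgHom.id K _) (algHom_ext fun i ↦ ?_) q
  fin_cases i <;> simp [eliminateLast]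

theorem linearForm_lineCoeff_dvd_sub_eliminateLast :
    linearForm (lineCoeff K) ∣ f - rename Fin.castSucc (eliminateLast K f) := by
  rw [← Ideal.mem_span_singleton, ← Ideal.Quotient.eq]
  refine DFunLike.congr_fun (f := Ideal.Quotient.mkₐ K (Ideal.span {linearForm (lineCoeff K)}))
    (g := (Ideal.Quotient.mkₐ K _).comp ((rename Fin.castSucc).comp (eliminateLast K)))
    (algHom_ext fun i ↦ ?_) f
  refine Ideal.Quotient.eq.2 (Ideal.mem_span_singleton.2 ?_)
  rw [linearForm_lineCoeff]
  fin_cases i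
  · simp [eliminateLast]
  · simp [eliminateLast]
  · exact ⟨-1, by simp [eliminateLast]⟩

theorem lineRestriction_linearForm_lineCoeff :
    lineRestriction K (linearForm (lineCoeff K)) = 0 := by
  simp [linearForm_lineCoeff, lineRestriction, eliminateLast]

theorem lineRestriction_powerProduct : lineRestriction K (powerProduct K e) = lineMonomial K e := by
  simp [powerProduct, lineRestriction, eliminateLast, lineMonomial, Fin.prod_univ_three]

theorem natDegree_lineRestriction_le (hf : f.IsHomogeneous k) :
    (lineRestriction K f).natDegree ≤ k := by
  rw [← mul_one k]
  refine aeval_natDegree_le _ (isHomogeneous_eliminateLast hf).totalDegree_le _ fun i ↦ ?_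
  fin_cases i
  exacts [Polynomial.natDegree_X_le, Polynomial.natDegree_one.trans_le zero_le_one]

theorem lineRestriction_mem_degreeLT (hf : f.IsHomogeneous k) :
    lineRestriction K f ∈ degreeLT K (k + 1) := by
  rw [Polynomial.degreeLT_succ_eq_degreeLE, Polynomial.mem_degreeLE,
    ← Polynomial.natDegree_le_iff_degree_le]
  exact natDegree_lineRestriction_le hf

theorem linearForm_lineCoeff_dvd_of_lineRestriction_eq_zero (hf : f.IsHomogeneous k)
    (h0 : lineRestriction K f = 0) : linearForm (lineCoeff K) ∣ f := by
  have hzero := Polynomial.homogenize_eq_of_isHomogeneous (isHomogeneous_eliminateLast hf) h0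
  rw [Polynomial.homogenize_zero] at hzero
  simpa only [← hzero, map_zero, sub_zero] using
    linearForm_lineCoeff_dvd_sub_eliminateLast (f := f)

theorem lineRestriction_mem_lineMultiples (hf : f ∈ monomialMultiples K k e) :
    lineRestriction K f ∈ lineMultiples K k e := by
  obtain ⟨hdvd, hf⟩ := mem_monomialMultiples.1 hf
  obtain ⟨g, hg, rfl⟩ := exists_isHomogeneous_eq_mul_of_dvd isHomogeneous_powerProduct hf hdvd
  rcases eq_or_ne (lineRestriction K (powerProduct K e * g)) 0 with h0 | h0
  · rw [h0]; exact zero_mem _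
  have hle : ∑ v, e v + (k - ∑ v, e v) = k :=
    (isHomogeneous_powerProduct.mul hg).inj_right hf
      (ne_of_apply_ne (lineRestriction K) (by rwa [map_zero]))
  rw [mem_lineMultiples_iff h0]
  rw [map_mul, lineRestriction_powerProduct] at h0 ⊢
  rw [natDegree_mul lineMonomial_ne_zero (right_ne_zero_of_mul h0), natDegree_lineMonomial]
  have hdeg := natDegree_lineRestriction_le hg
  rw [Fin.sum_univ_three] at hle hdeg
  exact ⟨dvd_mul_right _ _, by omega⟩

theorem exists_lineRestriction_eq (hh : h ∈ lineMultiples K k e) :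
    ∃ f ∈ monomialMultiples K k e, lineRestriction K f = h := by
  rcases eq_or_ne h 0 with rfl | h0
  · exact ⟨0, zero_mem _, map_zero _⟩
  rw [mem_lineMultiples_iff h0] at hh
  obtain ⟨⟨q, rfl⟩, hdeg⟩ := hh
  rw [natDegree_mul lineMonomial_ne_zero (right_ne_zero_of_mul h0), natDegree_lineMonomial] at hdeg
  have hle : q.natDegree + ∑ v, e v ≤ k := by rw [Fin.sum_univ_three]; omega
  refine ⟨powerProduct K e * rename Fin.castSucc (q.homogenize (k - ∑ v, e v)),
    mem_monomialMultiples.2 ⟨dvd_mul_right _ _, ?_⟩, ?_⟩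
  · have hhom := isHomogeneous_powerProduct (K := K) (e := e) |>.mul
      ((Polynomial.isHomogeneous_homogenize q (n := k - ∑ v, e v)).rename_isHomogeneous
        (f := (Fin.castSucc : Fin 2 → Fin 3)))
    rwa [Nat.add_sub_cancel' (by omega)] at hhom
  · rw [map_mul, lineRestriction_powerProduct, lineRestriction, AlgHom.comp_apply,
      eliminateLast_rename, Polynomial.aeval_homogenize_X_one q (by omega)]

theorem mem_lineMultiples_sup (he : h ∈ lineMultiples K k e) (he' : h ∈ lineMultiples K k e') :
    h ∈ lineMultiples K k (e ⊔ e') := by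
  rcases eq_or_ne h 0 with rfl | h0
  · exact zero_mem _
  rw [mem_lineMultiples_iff h0, lineMonomial_dvd_iff] at he he' ⊢
  simp only [Pi.sup_apply]
  refine ⟨⟨?_, ?_⟩, by omega⟩
  · rcases max_choice (e 0) (e' 0) with hmax | hmax <;> rw [hmax]
    exacts [he.1.1, he'.1.1]
  · rcases max_choice (e 2) (e' 2) with hmax | hmax <;> rw [hmax]
    exacts [he.1.2, he'.1.2]

/-- Since `f` and `-g` agree on the line, they agree there with a common multiple of the two
monomials; subtracting it from `f` and adding it to `g` makes both divisible by the equation of the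
line. -/
theorem exists_add_eq_linearForm_mul (hf : f ∈ monomialMultiples K k e)
    (hg : g ∈ monomialMultiples K k e') (hfg : lineRestriction K f + lineRestriction K g = 0) :
    ∃ p q, powerProduct K e ∣ p ∧ powerProduct K e' ∣ q ∧
      f + g = linearForm (lineCoeff K) * (p + q) := by
  have hfe' : lineRestriction K f ∈ lineMultiples K k e' := by
    rw [eq_neg_of_add_eq_zero_left hfg]
    exact neg_mem (lineRestriction_mem_lineMultiples hg)
  obtain ⟨t, ht, htf⟩ := exists_lineRestriction_eq
    (mem_lineMultiples_sup (lineRestriction_mem_lineMultiples hf) hfe')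
  rw [mem_monomialMultiples] at hf hg ht
  obtain ⟨p, hp⟩ := linearForm_lineCoeff_dvd_of_lineRestriction_eq_zero (hf.2.sub ht.2)
    (by rw [map_sub, htf, sub_self])
  obtain ⟨q, hq⟩ := linearForm_lineCoeff_dvd_of_lineRestriction_eq_zero (hg.2.add ht.2)
    (by rw [map_add, htf, add_comm, hfg])
  refine ⟨p, q, powerProduct_dvd_of_dvd_mul not_X_dvd_linearForm_lineCoeff ?_,
    powerProduct_dvd_of_dvd_mul not_X_dvd_linearForm_lineCoeff ?_, ?_⟩
  · rw [← hp]
    exact dvd_sub hf.1 ((powerProduct_dvd_powerProduct le_sup_left).trans ht.1)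
  · rw [← hq]
    exact dvd_add hg.1 ((powerProduct_dvd_powerProduct le_sup_right).trans ht.1)
  · rw [mul_add, ← hp, ← hq, sub_add_add_cancel]

end LineRestriction

section LinearSyzygies

variable {K : Type*} [Field K] {d : Fin 4 → Fin 3 → ℕ} {k : ℕ} {f g : MvPolynomial (Fin 3) K}
  {H : Fin 4 → MvPolynomial (Fin 3) K}

theorem lineRestriction_mem_syzygies (hH : ∀ i, H i ∈ monomialMultiples K k (d i))
    (hsum : ∑ i, H i = linearForm (lineCoeff K) * f) :
    (fun i ↦ lineRestriction K (H i)) ∈ syzygies K d k :=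
  mem_syzygies.2 ⟨fun i ↦ lineRestriction_mem_lineMultiples (hH i), by
    rw [← map_sum, hsum, map_mul, lineRestriction_linearForm_lineCoeff, zero_mul]⟩

theorem mem_monomialIdeal_of_lineRestriction_add_eq_zero
    (hH : ∀ i, H i ∈ monomialMultiples K k (d i))
    (hsum : ∑ i, H i = linearForm (lineCoeff K) * f) {i j : Fin 4} (hij : i ≠ j)
    (hadd : lineRestriction K (H i) + lineRestriction K (H j) = 0) : f ∈ monomialIdeal K d := by
  obtain ⟨l, m, hnodup⟩ := exists_nodup_of_ne hij
  have hadd' : lineRestriction K (H l) + lineRestriction K (H m) = 0 := by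
    have hzero := (mem_syzygies.1 (lineRestriction_mem_syzygies hH hsum)).2
    rwa [sum_univ_eq_of_nodup hnodup, ← add_assoc, hadd, zero_add] at hzero
  obtain ⟨p, q, hp, hq, hpq⟩ := exists_add_eq_linearForm_mul (hH i) (hH j) hadd
  obtain ⟨p', q', hp', hq', hpq'⟩ := exists_add_eq_linearForm_mul (hH l) (hH m) hadd'
  have hf : f = p + q + (p' + q') := mul_left_cancel₀ linearForm_lineCoeff_ne_zero <| by
    rw [← hsum, sum_univ_eq_of_nodup hnodup, ← add_assoc, hpq, hpq', mul_add _ (p + q)]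
  rw [hf]
  exact add_mem (add_mem (mem_monomialIdeal_of_dvd hp) (mem_monomialIdeal_of_dvd hq))
    (add_mem (mem_monomialIdeal_of_dvd hp') (mem_monomialIdeal_of_dvd hq'))

theorem unsplit_lineRestriction (hH : ∀ i, H i ∈ monomialMultiples K k (d i))
    (hsum : ∑ i, H i = linearForm (lineCoeff K) * f) (hf : f ∉ monomialIdeal K d) :
    Unsplit fun i ↦ lineRestriction K (H i) :=
  fun _ _ hij hadd ↦ hf (mem_monomialIdeal_of_lineRestriction_add_eq_zero hH hsum hij hadd)

theorem exists_sub_mul_mem_monomialIdeal (hg : g.IsHomogeneous (k + 1))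
    (hmem : lineRestriction K g ∈ lineIdeal K d (k + 1)) :
    ∃ f, f.IsHomogeneous k ∧ g - linearForm (lineCoeff K) * f ∈ monomialIdeal K d := by
  obtain ⟨h, hh, hsum⟩ := mem_lineIdeal.1 hmem
  choose H hH hHh using fun i ↦ exists_lineRestriction_eq (hh i)
  have hhom : (g - ∑ i, H i).IsHomogeneous (k + 1) :=
    hg.sub (IsHomogeneous.sum _ _ _ fun i _ ↦ (mem_monomialMultiples.1 (hH i)).2)
  have hzero : lineRestriction K (g - ∑ i, H i) = 0 := by
    rw [map_sub, map_sum, ← hsum, sub_eq_zero]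
    exact Finset.sum_congr rfl fun i _ ↦ (hHh i).symm
  obtain ⟨f, hf, hfg⟩ := exists_isHomogeneous_eq_mul_of_dvd isHomogeneous_linearForm hhom
    (linearForm_lineCoeff_dvd_of_lineRestriction_eq_zero hhom hzero)
  refine ⟨f, hf, ?_⟩
  rw [← hfg, sub_sub_cancel]
  exact sum_mem_monomialIdeal hH

end LinearSyzygies

section LinearAlgebra

variable {K V W : Type*} [Field K] [AddCommGroup V] [Module K V] [AddCommGroup W] [Module K W]

theorem sup_span_singleton_eq_of_finrank_le {S T : Submodule K V} [FiniteDimensional K T]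
    (hST : S ≤ T) {x : V} (hxS : x ∉ S) (hxT : x ∈ T)
    (hfinrank : Module.finrank K T ≤ Module.finrank K S + 1) : S ⊔ Submodule.span K {x} = T := by
  have hle : S ⊔ Submodule.span K {x} ≤ T :=
    sup_le hST ((Submodule.span_singleton_le_iff_mem x T).2 hxT)
  have := Submodule.finiteDimensional_of_le hle
  have hlt : S < S ⊔ Submodule.span K {x} := by
    rwa [left_lt_sup, Submodule.span_singleton_le_iff_mem]
  exact Submodule.eq_of_le_of_finrank_le hle
    (hfinrank.trans (Submodule.finrank_lt_finrank_of_lt hlt))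

theorem finrank_eq_of_ker_le_of_range_sup_eq_top [FiniteDimensional K V] [FiniteDimensional K W]
    {T : V →ₗ[K] W} (hinj : ¬ Function.Injective T) (hsurj : ¬ Function.Surjective T)
    {x : V} {w : W} (hker : LinearMap.ker T ≤ Submodule.span K {x})
    (hrange : LinearMap.range T ⊔ Submodule.span K {w} = ⊤) :
    Module.finrank K W = Module.finrank K V := by
  have hrank := T.finrank_range_add_finrank_ker
  have hker_le : Module.finrank K (LinearMap.ker T) ≤ 1 :=
    (Submodule.finrank_mono hker).trans ((finrank_span_le_card _).trans_eq (by simp))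
  have hker_ne : Module.finrank K (LinearMap.ker T) ≠ 0 := fun h ↦
    hinj (LinearMap.ker_eq_bot.1 (Submodule.finrank_eq_zero.1 h))
  have hrange_le : Module.finrank K W ≤ Module.finrank K (LinearMap.range T) + 1 := by
    rw [← finrank_top K W, ← hrange]
    exact (Submodule.finrank_add_le_finrank_add_finrank _ _).trans
      (Nat.add_le_add_left ((finrank_span_le_card _).trans_eq (by simp)) _)
  have hrange_lt : Module.finrank K (LinearMap.range T) < Module.finrank K W :=
    Submodule.finrank_lt fun h ↦ hsurj (LinearMap.range_eq_top.1 h)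
  omega

end LinearAlgebra

section FailureDegree

variable {K : Type*} [Field K] {d : Fin 4 → Fin 3 → ℕ} {k : ℕ}

theorem surjective_mulForm_of_lineIdeal_eq_degreeLT
    (h : lineIdeal K d (k + 1) = degreeLT K (k + 2)) :
    Function.Surjective (mulForm (monomialIdeal K d) (lineCoeff K) k) :=
  surjective_mulForm_iff.2 fun _ hg ↦
    exists_sub_mul_mem_monomialIdeal hg (h ▸ lineRestriction_mem_degreeLT hg)

theorem exists_unsplit_of_not_injective
    (hinj : ¬ Function.Injective (mulForm (monomialIdeal K d) (lineCoeff K) k)) :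
    ∃ (f : MvPolynomial (Fin 3) K) (H : Fin 4 → MvPolynomial (Fin 3) K),
      f.IsHomogeneous k ∧ (∀ i, H i ∈ monomialMultiples K (k + 1) (d i)) ∧
        ∑ i, H i = linearForm (lineCoeff K) * f ∧ Unsplit fun i ↦ lineRestriction K (H i) := by
  rw [injective_mulForm_iff] at hinj
  push Not at hinj
  obtain ⟨f, hf, hLf, hfI⟩ := hinj
  obtain ⟨H, hH, hsum⟩ := exists_sum_eq_of_mem_monomialIdeal (linearForm_mul_mem ⟨f, hf⟩) hLf
  exact ⟨f, H, hf, hH, hsum, unsplit_lineRestriction hH hsum hfI⟩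

theorem exists_ker_mulForm_le_span_singleton [CharZero K]
    (hd : ∀ v, ∃ i j, i ≠ j ∧ d i v = 0 ∧ d j v = 0)
    (hinj : ¬ Function.Injective (mulForm (monomialIdeal K d) (lineCoeff K) k))
    (hsurj : ¬ Function.Surjective (mulForm (monomialIdeal K d) (lineCoeff K) k)) :
    ∃ x, LinearMap.ker (mulForm (monomialIdeal K d) (lineCoeff K) k) ≤ Submodule.span K {x} := by
  obtain ⟨f, H, hf, hH, hsum, hunsplit⟩ := exists_unsplit_of_not_injective hinj
  have hspan := syzygies_succ_le_span_singleton hd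
    (mt surjective_mulForm_of_lineIdeal_eq_degreeLT hsurj) (lineRestriction_mem_syzygies hH hsum)
    hunsplit
  refine ⟨gradedMk _ k ⟨f, hf⟩, fun x hx ↦ ?_⟩
  obtain ⟨⟨f', hf'⟩, rfl⟩ := gradedMk_surjective x
  rw [LinearMap.mem_ker, mulForm_gradedMk, gradedMk_eq_zero_iff] at hx
  obtain ⟨H', hH', hsum'⟩ :=
    exists_sum_eq_of_mem_monomialIdeal (linearForm_mul_mem ⟨f', hf'⟩) hx
  obtain ⟨c, hc⟩ :=
    Submodule.mem_span_singleton.1 (hspan (lineRestriction_mem_syzygies hH' hsum'))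
  refine Submodule.mem_span_singleton.2 ⟨c, ?_⟩
  rw [← map_smul, gradedMk_eq_iff]
  have hzero : ∀ i, lineRestriction K (c • H i - H' i) = 0 := fun i ↦ by
    rw [map_sub, map_smul, sub_eq_zero]
    exact congrFun hc i
  refine mem_monomialIdeal_of_lineRestriction_add_eq_zero
    (fun i ↦ sub_mem (Submodule.smul_mem _ c (hH i)) (hH' i)) ?_ zero_ne_one
    (by rw [hzero, hzero, add_zero])
  rw [Finset.sum_sub_distrib, ← Finset.smul_sum, hsum, hsum', mul_sub, ← mul_smul_comm]
  rfl

theorem range_mulForm_sup_span_singleton_eq_top {g : MvPolynomial (Fin 3) K}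
    (hg : g.IsHomogeneous (k + 1))
    (h : lineIdeal K d (k + 1) ⊔ Submodule.span K {lineRestriction K g} = degreeLT K (k + 2)) :
    LinearMap.range (mulForm (monomialIdeal K d) (lineCoeff K) k) ⊔
      Submodule.span K {gradedMk _ _ ⟨g, hg⟩} = ⊤ := by
  refine eq_top_iff.2 fun x _ ↦ ?_
  obtain ⟨⟨g', hg'⟩, rfl⟩ := gradedMk_surjective x
  obtain ⟨p, hp, q, hq, hpq⟩ := Submodule.mem_sup.1 (h ▸ lineRestriction_mem_degreeLT hg')
  obtain ⟨c, rfl⟩ := Submodule.mem_span_singleton.1 hq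
  obtain ⟨f, hf, hmem⟩ := exists_sub_mul_mem_monomialIdeal (g := g' - c • g)
    (sub_mem hg' (Submodule.smul_mem _ c hg))
    (by rwa [map_sub, map_smul, ← hpq, add_sub_cancel_right])
  refine Submodule.mem_sup.2 ⟨_, ⟨gradedMk _ k ⟨f, hf⟩, rfl⟩, _,
    Submodule.smul_mem _ c (Submodule.mem_span_singleton_self _), ?_⟩
  rw [mulForm_gradedMk, ← map_smul, ← map_add, eq_comm, gradedMk_eq_iff]
  change g' - (linearForm (lineCoeff K) * f + c • g) ∈ monomialIdeal K d
  rwa [add_comm, ← sub_sub]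

theorem exists_range_mulForm_sup_span_singleton_eq_top [CharZero K]
    (hd : ∀ v, ∃ i j, i ≠ j ∧ d i v = 0 ∧ d j v = 0)
    (hinj : ¬ Function.Injective (mulForm (monomialIdeal K d) (lineCoeff K) k))
    (hsurj : ¬ Function.Surjective (mulForm (monomialIdeal K d) (lineCoeff K) k)) :
    ∃ w, LinearMap.range (mulForm (monomialIdeal K d) (lineCoeff K) k) ⊔ Submodule.span K {w}
      = ⊤ := by
  obtain ⟨f, H, -, hH, hsum, hunsplit⟩ := exists_unsplit_of_not_injective hinj
  have hfinrank := succ_le_finrank_lineIdeal_succ hd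
    (mt surjective_mulForm_of_lineIdeal_eq_degreeLT hsurj) (lineRestriction_mem_syzygies hH hsum)
    hunsplit
  obtain ⟨g, hg, hgJ⟩ : ∃ g : MvPolynomial (Fin 3) K, g.IsHomogeneous (k + 1) ∧
      lineRestriction K g ∉ lineIdeal K d (k + 1) := by
    by_contra! h
    exact hsurj (surjective_mulForm_iff.2 fun g hg ↦
      exists_sub_mul_mem_monomialIdeal hg (h g hg))
  have := (Polynomial.degreeLTEquiv K (k + 2)).symm.finiteDimensional
  have hsup := sup_span_singleton_eq_of_finrank_le lineIdeal_le_degreeLT hgJ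
    (lineRestriction_mem_degreeLT hg)
    (by rw [(Polynomial.degreeLTEquiv K _).finrank_eq, Module.finrank_fin_fun]; omega)
  exact ⟨_, range_mulForm_sup_span_singleton_eq_top hg hsup⟩

theorem hdim_succ_eq_of_not_injective [CharZero K] (hd : ∀ v, ∃ i j, i ≠ j ∧ d i v = 0 ∧ d j v = 0)
    (hinj : ¬ Function.Injective (mulForm (monomialIdeal K d) (lineCoeff K) k))
    (hsurj : ¬ Function.Surjective (mulForm (monomialIdeal K d) (lineCoeff K) k)) :
    hdim K 3 (monomialIdeal K d) (k + 1) = hdim K 3 (monomialIdeal K d) k := by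
  obtain ⟨x, hker⟩ := exists_ker_mulForm_le_span_singleton hd hinj hsurj
  obtain ⟨w, hrange⟩ := exists_range_mulForm_sup_span_singleton_eq_top hd hinj hsurj
  have hfinrank := finrank_eq_of_ker_le_of_range_sup_eq_top hinj hsurj hker hrange
  exact hfinrank

theorem sum_exponents_eq_of_not_injective [CharZero K]
    (hd : ∀ v, ∃ i j, i ≠ j ∧ d i v = 0 ∧ d j v = 0)
    (hinj : ¬ Function.Injective (mulForm (monomialIdeal K d) (lineCoeff K) k))
    (hsurj : ¬ Function.Surjective (mulForm (monomialIdeal K d) (lineCoeff K) k)) :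
    ∑ i, ∑ v, d i v = 3 * (k + 2) := by
  obtain ⟨f, H, -, hH, hsum, hunsplit⟩ := exists_unsplit_of_not_injective hinj
  exact sum_exponents_eq hd (mt surjective_mulForm_of_lineIdeal_eq_degreeLT hsurj)
    (lineRestriction_mem_syzygies hH hsum) hunsplit

theorem surjective_mulForm_succ_of_not_injective [CharZero K]
    (hd : ∀ v, ∃ i j, i ≠ j ∧ d i v = 0 ∧ d j v = 0)
    (hinj : ¬ Function.Injective (mulForm (monomialIdeal K d) (lineCoeff K) k))
    (hsurj : ¬ Function.Surjective (mulForm (monomialIdeal K d) (lineCoeff K) k)) :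
    Function.Surjective (mulForm (monomialIdeal K d) (lineCoeff K) (k + 1)) := by
  obtain ⟨f, H, -, hH, hsum, hunsplit⟩ := exists_unsplit_of_not_injective hinj
  exact surjective_mulForm_of_lineIdeal_eq_degreeLT <| lineIdeal_add_two_eq_degreeLT hd
    (mt surjective_mulForm_of_lineIdeal_eq_degreeLT hsurj) (lineRestriction_mem_syzygies hH hsum)
    hunsplit

theorem injective_mulForm_of_lt [CharZero K] (hd : ∀ v, ∃ i j, i ≠ j ∧ d i v = 0 ∧ d j v = 0)
    (hinj : ¬ Function.Injective (mulForm (monomialIdeal K d) (lineCoeff K) k))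
    (hsurj : ¬ Function.Surjective (mulForm (monomialIdeal K d) (lineCoeff K) k)) {j : ℕ}
    (hj : j < k) : Function.Injective (mulForm (monomialIdeal K d) (lineCoeff K) j) := by
  by_contra hinj'
  have hsum := sum_exponents_eq_of_not_injective hd hinj hsurj
  have hsum' := sum_exponents_eq_of_not_injective hd hinj'
    (mt (surjective_mulForm_of_le hj.le) hsurj)
  omega

theorem hdim_le_of_not_injective [CharZero K] (hd : ∀ v, ∃ i j, i ≠ j ∧ d i v = 0 ∧ d j v = 0)
    (hinj : ¬ Function.Injective (mulForm (monomialIdeal K d) (lineCoeff K) k))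
    (hsurj : ¬ Function.Surjective (mulForm (monomialIdeal K d) (lineCoeff K) k)) (l : ℕ) :
    hdim K 3 (monomialIdeal K d) l ≤ hdim K 3 (monomialIdeal K d) k :=
  hdim_le_of_forall_injective_of_surjective (fun _ ↦ injective_mulForm_of_lt hd hinj hsurj)
    (hdim_succ_eq_of_not_injective hd hinj hsurj).le
    (surjective_mulForm_succ_of_not_injective hd hinj hsurj) l

theorem not_injective_mulForm_of_not_injective [CharZero K]
    (hd : ∀ v, ∃ i j, i ≠ j ∧ d i v = 0 ∧ d j v = 0)
    (hinj : ¬ Function.Injective (mulForm (monomialIdeal K d) (lineCoeff K) k))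
    (hsurj : ¬ Function.Surjective (mulForm (monomialIdeal K d) (lineCoeff K) k))
    (v : Fin 3 → K) : ¬ Function.Injective (mulForm (monomialIdeal K d) v k) := by
  refine not_injective_mulForm_of_forall_ne_zero (hdim_succ_eq_of_not_injective hd hinj hsurj)
    (fun w hw h ↦ hinj ?_) v
  have hmul : lineCoeff K * (w / lineCoeff K) = w :=
    funext fun i ↦ mul_div_cancel₀ (w i) (lineCoeff_ne_zero i)
  exact injective_mulForm_of_injective_mul (v := w / lineCoeff K)
    (fun i ↦ div_ne_zero (hw i) (lineCoeff_ne_zero i)) (hmul.symm ▸ h)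

end FailureDegree

section AlmostCompleteIntersection

variable {a b c α β γ : ℕ}

/-- The exponents of the generators of the almost complete intersection `I_{a,b,c,α,β,γ}`. -/
def almostCompleteExponents (a b c α β γ : ℕ) : Fin 4 → Fin 3 → ℕ :=
  ![![a, 0, 0], ![0, b, 0], ![0, 0, c], ![α, β, γ]]

theorem exists_ne_almostCompleteExponents_eq_zero (v : Fin 3) :
    ∃ i j, i ≠ j ∧ almostCompleteExponents a b c α β γ i v = 0 ∧
      almostCompleteExponents a b c α β γ j v = 0 := by
  fin_cases v
  exacts [⟨1, 2, by decide, rfl, rfl⟩, ⟨0, 2, by decide, rfl, rfl⟩, ⟨0, 1, by decide, rfl, rfl⟩]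

theorem sum_almostCompleteExponents :
    ∑ i, ∑ v, almostCompleteExponents a b c α β γ i v = a + b + c + α + β + γ := by
  simp [almostCompleteExponents, Fin.sum_univ_succ, add_assoc]

theorem monomialIdeal_almostCompleteExponents {K : Type*} [Field K] :
    monomialIdeal K (almostCompleteExponents a b c α β γ) =
      Ideal.span {X 0 ^ a, X 1 ^ b, X 2 ^ c, X 0 ^ α * X 1 ^ β * X 2 ^ γ} := by
  rw [monomialIdeal]
  congr 1
  ext f
  simp [almostCompleteExponents, Fin.exists_fin_succ, powerProduct, Fin.prod_univ_three, eq_comm]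

end AlmostCompleteIntersection

theorem stmt19_general {K : Type*} [Field K] [CharZero K] (d : Fin 4 → Fin 3 → ℕ)
    (hd : ∀ v, ∃ i j, i ≠ j ∧ d i v = 0 ∧ d j v = 0) (hWLP : ¬ WLP (monomialIdeal K d)) :
    3 ∣ ∑ i, ∑ v, d i v ∧ ∀ s, s = (∑ i, ∑ v, d i v) / 3 - 2 →
      hdim K 3 (monomialIdeal K d) s = sSup (Set.range (hdim K 3 (monomialIdeal K d))) ∧
      hdim K 3 (monomialIdeal K d) (s + 1) = hdim K 3 (monomialIdeal K d) s ∧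
      ∀ y : MvPolynomial (Fin 3) K, y.IsHomogeneous 1 →
        ∃ f : MvPolynomial (Fin 3) K, f.IsHomogeneous s ∧ f ∉ monomialIdeal K d ∧
          y * f ∈ monomialIdeal K d := by
  obtain ⟨k, hinj, hsurj⟩ : ∃ k,
      ¬ Function.Injective (mulForm (monomialIdeal K d) (lineCoeff K) k) ∧
        ¬ Function.Surjective (mulForm (monomialIdeal K d) (lineCoeff K) k) := by
    by_contra! h
    exact hWLP (wlp_iff.2 ⟨lineCoeff K, fun k ↦ or_iff_not_imp_left.2 (h k)⟩)
  have hsum := sum_exponents_eq_of_not_injective hd hinj hsurj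
  have hsucc := hdim_succ_eq_of_not_injective hd hinj hsurj
  refine ⟨⟨k + 2, hsum⟩, ?_⟩
  obtain rfl : k = (∑ i, ∑ v, d i v) / 3 - 2 := by omega
  rintro _ rfl
  refine ⟨?_, hsucc, ?_⟩
  · exact (IsGreatest.csSup_eq ⟨Set.mem_range_self _,
      Set.forall_mem_range.2 (hdim_le_of_not_injective hd hinj hsurj)⟩).symm
  · intro y hy
    obtain ⟨v, rfl⟩ := exists_eq_linearForm hy
    have hv := not_injective_mulForm_of_not_injective hd hinj hsurj v
    rw [injective_mulForm_iff] at hv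
    push Not at hv
    obtain ⟨f, hf, hmem, hfI⟩ := hv
    exact ⟨f, hf, hfI, hmem⟩

/-- Let `char K = 0` and let
`I = (x₁^a, x₂^b, x₃^c, x₁^α x₂^β x₃^γ)` be a monomial almost complete
intersection (so `α < a`, `β < b`, `γ < c` and at least two of `α, β, γ` are
nonzero).  If `A = S/I` fails the WLP, then `3 ∣ a+b+c+α+β+γ`, and with
`s = (a+b+c+α+β+γ)/3 - 2` one has
`dim_K A_s = dim_K A_{s+1} = max_k dim_K A_k`, and multiplication
`×y : A_s → A_{s+1}` is not injective for any linear form `y`. -/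
theorem stmt19 {K : Type*} [Field K] [CharZero K] (a b c α β γ : ℕ)
    (hα : α < a) (hβ : β < b) (hγ : γ < c)
    (htwo : (α ≠ 0 ∧ β ≠ 0) ∨ (α ≠ 0 ∧ γ ≠ 0) ∨ (β ≠ 0 ∧ γ ≠ 0))
    (I : Ideal (MvPolynomial (Fin 3) K))
    (hI : I = Ideal.span {X 0 ^ a, X 1 ^ b, X 2 ^ c, X 0 ^ α * X 1 ^ β * X 2 ^ γ})
    (hWLP : ¬ WLP I) :
    3 ∣ (a + b + c + α + β + γ)
    ∧ (∀ s : ℕ, s = (a + b + c + α + β + γ) / 3 - 2 →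
        hdim K 3 I s = sSup (Set.range (hdim K 3 I))
        ∧ hdim K 3 I (s + 1) = hdim K 3 I s
        ∧ ∀ y : MvPolynomial (Fin 3) K, y.IsHomogeneous 1 →
            ∃ f : MvPolynomial (Fin 3) K, f.IsHomogeneous s ∧ f ∉ I ∧ y * f ∈ I) := by
  rw [← monomialIdeal_almostCompleteExponents] at hI
  subst hI
  simpa only [sum_almostCompleteExponents] using
    stmt19_general _ exists_ne_almostCompleteExponents_eq_zero hWLP
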